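/- arXiv:math/0301175 — 4 statements merged into one kernel-verified Lean document; each statement's English description precedes it below -/
import Mathlib

section
/- Division lemma, second order (away from the origin): let v ∈ ℝ³ with |v| < 1 and i,j ∈ {0,1,2,3}. Set T = ∂_t + v·∇_x, b⁰_{ij} = α_i α_j, b¹_{ij} = ∂_i α_j − T(α_i α_j) − α_i Tα_j, and b²_{ij} = −∂_i(Tα_j) + T(α_i Tα_j). Then for every φ ∈ C_c^∞(ℝ⁴ \ {0}), ⟨Y, ∂_i ∂_j φ⟩ = ⟨Y, b⁰_{ij} T²φ − b¹_{ij} Tφ + b²_{ij} φ⟩; that is, ∂²_{ij} Y = T²(b⁰_{ij} Y) + T(b¹_{ij} Y) + b²_{ij} Y in the sense of distributions on ℝ⁴ \ {0}. -/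
open MeasureTheory Real Set Filter Metric RealInnerProductSpace
open scoped ENNReal NNReal Topology

noncomputable section

/-- Physical space `ℝ³` with its Euclidean structure. -/
abbrev E3 : Type := EuclideanSpace ℝ (Fin 3)

/-- The `i`-th standard basis vector of `ℝ³`. -/
def e3 (i : Fin 3) : E3 := EuclideanSpace.single i 1

/-- The rotation invariant surface measure on the unit sphere `S² ⊂ ℝ³`
(with total mass `4π`). -/
def sphMeasure : Measure (Metric.sphere (0 : E3) 1) := (volume : Measure E3).toSphere

/-- The forward fundamental solution `Y` of the d'Alembertian in `1+3` dimensions, as a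
measure on `ℝ⁴ = ℝₜ × ℝ³ₓ`: it acts on a function `φ` by
`⟨Y,φ⟩ = ∫₀^∞ (1/(4πt)) ∫_{|x|=t} φ(t,x) dσ_t(x) dt
       = ∫₀^∞ (t/(4π)) ∫_{S²} φ(t,tω) dσ(ω) dt`. -/
def Ymeas : Measure (ℝ × E3) :=
  Measure.map (fun q : ℝ × Metric.sphere (0 : E3) 1 => (q.1, q.1 • (q.2 : E3)))
    ((((volume : Measure ℝ).restrict (Set.Ioi 0)).withDensity
        fun t => ENNReal.ofReal (t / (4 * Real.pi))).prod sphMeasure)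

/-- Time derivative `∂ₜ` of a function on `ℝ⁴ = ℝₜ × ℝ³ₓ`. -/
def dt4 (g : ℝ × E3 → ℝ) (p : ℝ × E3) : ℝ := fderiv ℝ g p ((1 : ℝ), (0 : E3))

/-- Spatial partial derivative `∂_{x_i}` of a function on `ℝ⁴ = ℝₜ × ℝ³ₓ`. -/
def dx4 (i : Fin 3) (g : ℝ × E3 → ℝ) (p : ℝ × E3) : ℝ := fderiv ℝ g p ((0 : ℝ), e3 i)

/-- The streaming operator `T = ∂ₜ + v·∇ₓ`, i.e. the directional derivative
along `(1,v)`. -/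
def Tstr (v : E3) (g : ℝ × E3 → ℝ) (p : ℝ × E3) : ℝ := fderiv ℝ g p ((1 : ℝ), v)

/-- The four coordinate directions of `ℝ⁴ = ℝₜ × ℝ³ₓ` (with `x₀ = t`). -/
def dir4 : Fin 4 → ℝ × E3 :=
  Fin.cons ((1 : ℝ), (0 : E3)) fun j : Fin 3 => ((0 : ℝ), e3 j)

/-- The functions `α₀(t,x) = t/(t - x·v)` and `α_i(t,x) = x_i/(x·v - t)`, `i = 1,2,3`. -/
def alphaF (v : E3) : Fin 4 → ℝ × E3 → ℝ :=
  Fin.cons (fun p => p.1 / (p.1 - ⟪p.2, v⟫)) fun (j : Fin 3) p => p.2 j / (⟪p.2, v⟫ - p.1)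

/-- `Tα_i`, the streaming derivative of `α_i`. -/
def TalphaF (v : E3) (i : Fin 4) (p : ℝ × E3) : ℝ := fderiv ℝ (alphaF v i) p ((1 : ℝ), v)

/-- The coefficient `b⁰_{ij} = α_i α_j`. -/
def b0F (v : E3) (i j : Fin 4) (p : ℝ × E3) : ℝ := alphaF v i p * alphaF v j p

/-- The coefficient `b¹_{ij} = ∂_i α_j - T(α_i α_j) - α_i Tα_j`. -/
def b1F (v : E3) (i j : Fin 4) (p : ℝ × E3) : ℝ :=
  fderiv ℝ (alphaF v j) p (dir4 i)
    - fderiv ℝ (fun q => alphaF v i q * alphaF v j q) p ((1 : ℝ), v)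
    - alphaF v i p * TalphaF v j p

/-- The coefficient `b²_{ij} = -∂_i(Tα_j) + T(α_i Tα_j)`. -/
def b2F (v : E3) (i j : Fin 4) (p : ℝ × E3) : ℝ :=
  -fderiv ℝ (TalphaF v j) p (dir4 i)
    + fderiv ℝ (fun q => alphaF v i q * TalphaF v j q) p ((1 : ℝ), v)

/-! Write `⟪·, ·⟫` for the Minkowski form and `Q (t, x) = t² - ‖x‖²`. Up to a constant, `Y` is
`δ(Q)` on `{t > 0}`, that is, the measure `dx / ‖x‖` on the cone, and formally
`∂_w δ(Q) = 2 ⟪w, ·⟫ δ'(Q)` for every constant vector `w`. Hence `∂_w Y` depends on `w` only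
through the factor `⟪w, ·⟫`, and dividing by `⟪e, ·⟫` with `e = (1, v)` trades `∂_w` for
`T = ∂_e`.

The role of `δ'(Q)` is played by the identity `⟨Y, ∂_w ψ⟩ = ⟨Y, ∂_t (⟪w, ·⟫ ψ / t)⟩`: the field
`∂_w - (⟪w, ·⟫ / t) ∂_t` is tangent to the cone, so applied to `ψ / t` it gives a directional
derivative in the parameter `x`, which has integral zero. Since
`⟪w, ·⟫ ψ = ⟪e, ·⟫ α_w ψ`, comparing the identities for `(w, ψ)` and `(e, α_w ψ)` yields
`⟨Y, ∂_w ψ⟩ = ⟨Y, T (α_w ψ)⟩`. Applying this twice, with the Leibniz rule in between, gives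
`⟨Y, ∂_i ∂_j φ⟩ = ⟨Y, T (α_i T (α_j φ)) - T ((∂_i α_j) φ)⟩`. -/

/-- The derivative of `f` along the constant vector field `w`, as an operator on functions so that
it can be iterated; it vanishes where `f` is not differentiable. -/
def dirDeriv {F : Type*} [NormedAddCommGroup F] [NormedSpace ℝ F] (w : F) (f : F → ℝ) (p : F) : ℝ :=
  fderiv ℝ f p w

section DirDeriv

variable {F : Type*} [NormedAddCommGroup F] [NormedSpace ℝ F] {f g : F → ℝ} {p : F}

lemma dirDeriv_congr (h : f =ᶠ[𝓝 p] g) (w : F) : dirDeriv w f p = dirDeriv w g p := by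
  rw [dirDeriv, dirDeriv, h.fderiv_eq]

lemma contDiffAt_dirDeriv {m n : WithTop ℕ∞} (hf : ContDiffAt ℝ n f p) (hmn : m + 1 ≤ n) (w : F) :
    ContDiffAt ℝ m (dirDeriv w f) p :=
  (hf.fderiv_right hmn).clm_apply contDiffAt_const

lemma dirDeriv_add (hf : DifferentiableAt ℝ f p) (hg : DifferentiableAt ℝ g p) (w : F) :
    dirDeriv w (f + g) p = dirDeriv w f p + dirDeriv w g p := by
  simp only [dirDeriv, fderiv_add hf hg, _root_.add_apply]

lemma dirDeriv_mul (hf : DifferentiableAt ℝ f p) (hg : DifferentiableAt ℝ g p) (w : F) :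
    dirDeriv w (f * g) p = f p * dirDeriv w g p + g p * dirDeriv w f p := by
  simp only [dirDeriv, fderiv_mul hf hg, _root_.add_apply, _root_.smul_apply, smul_eq_mul]

lemma dirDeriv_mul_eventuallyEq (hf : ContDiffAt ℝ 1 f p) (hg : ContDiffAt ℝ 1 g p) (w : F) :
    dirDeriv w (f * g) =ᶠ[𝓝 p] f * dirDeriv w g + g * dirDeriv w f := by
  filter_upwards [hf.eventually (by simp), hg.eventually (by simp)] with q hfq hgq
  exact dirDeriv_mul (hfq.differentiableAt one_ne_zero) (hgq.differentiableAt one_ne_zero) w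

lemma differentiableAt_dirDeriv (hf : ContDiffAt ℝ 2 f p) (w : F) :
    DifferentiableAt ℝ (dirDeriv w f) p :=
  (contDiffAt_dirDeriv hf (by norm_num) w).differentiableAt one_ne_zero

lemma dirDeriv_comm (hf : ContDiffAt ℝ 2 f p) (u w : F) :
    dirDeriv u (dirDeriv w f) p = dirDeriv w (dirDeriv u f) p := by
  have hd : DifferentiableAt ℝ (fderiv ℝ f) p :=
    (hf.fderiv_right (m := 1) (by norm_num)).differentiableAt one_ne_zero
  have dirDeriv_dirDeriv (a b : F) :
      dirDeriv a (dirDeriv b f) p = fderiv ℝ (fderiv ℝ f) p a b := by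
    change fderiv ℝ (fun q => fderiv ℝ f q b) p a = _
    simp [fderiv_clm_apply hd (differentiableAt_const b)]
  rw [dirDeriv_dirDeriv, dirDeriv_dirDeriv]
  exact hf.isSymmSndFDerivAt (by simp) u w

lemma dirDeriv_dirDeriv_mul (hf : ContDiffAt ℝ 2 f p) (hg : ContDiffAt ℝ 2 g p) (u w : F) :
    dirDeriv u (dirDeriv w (f * g)) p
      = f p * dirDeriv u (dirDeriv w g) p + dirDeriv w g p * dirDeriv u f p
        + (g p * dirDeriv u (dirDeriv w f) p + dirDeriv w f p * dirDeriv u g p) := by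
  have df := hf.differentiableAt two_ne_zero
  have dg := hg.differentiableAt two_ne_zero
  have df' := differentiableAt_dirDeriv hf w
  have dg' := differentiableAt_dirDeriv hg w
  rw [dirDeriv_congr (dirDeriv_mul_eventuallyEq (hf.of_le one_le_two) (hg.of_le one_le_two) w) u,
    dirDeriv_add (df.mul dg') (dg.mul df'), dirDeriv_mul df dg', dirDeriv_mul dg df']

lemma dirDeriv_mul_dirDeriv (hf : ContDiffAt ℝ 2 f p) (hg : ContDiffAt ℝ 2 g p) (u w : F) :
    dirDeriv w (f * dirDeriv u g) p
      = dirDeriv u (dirDeriv w (f * g)) p - dirDeriv w (dirDeriv u f * g) p := by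
  rw [dirDeriv_mul (hf.differentiableAt two_ne_zero) (differentiableAt_dirDeriv hg u),
    dirDeriv_mul (differentiableAt_dirDeriv hf u) (hg.differentiableAt two_ne_zero),
    dirDeriv_dirDeriv_mul hf hg, dirDeriv_comm hf u w, dirDeriv_comm hg u w]
  ring

lemma dirDeriv_mul_dirDeriv_mul_sub {a b φ : F → ℝ} (ha : DifferentiableAt ℝ a p)
    (hb : ContDiffAt ℝ 2 b p) (hφ : ContDiffAt ℝ 2 φ p) (u e : F) :
    dirDeriv e (a * dirDeriv e (b * φ)) p - dirDeriv e (dirDeriv u b * φ) p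
      = a p * b p * dirDeriv e (dirDeriv e φ) p
        - (dirDeriv u b p - dirDeriv e (a * b) p - a p * dirDeriv e b p) * dirDeriv e φ p
        + (-dirDeriv u (dirDeriv e b) p + dirDeriv e (a * dirDeriv e b) p) * φ p := by
  have db := hb.differentiableAt two_ne_zero
  have dφ := hφ.differentiableAt two_ne_zero
  have db_mul : DifferentiableAt ℝ (dirDeriv e (b * φ)) p :=
    differentiableAt_dirDeriv (hb.mul hφ) e
  rw [dirDeriv_mul ha db_mul, dirDeriv_mul (differentiableAt_dirDeriv hb u) dφ,
    dirDeriv_dirDeriv_mul hb hφ, dirDeriv_mul db dφ, dirDeriv_mul ha db,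
    dirDeriv_mul ha (differentiableAt_dirDeriv hb e), dirDeriv_comm hb u e]
  ring

end DirDeriv

section Haar

variable {E : Type*} [NormedAddCommGroup E] [NormedSpace ℝ E] [FiniteDimensional ℝ E]
  [MeasurableSpace E] [BorelSpace E] (μ : Measure E) [μ.IsAddHaarMeasure]

lemma integral_fderiv_apply_eq_zero {f : E → ℝ} (hf : ContDiff ℝ 1 f) (hc : HasCompactSupport f)
    (w : E) : ∫ x, fderiv ℝ f x w ∂μ = 0 := by
  have integrable_fderiv : Integrable (fun x => fderiv ℝ f x w) μ :=
    ((hf.continuous_fderiv one_ne_zero).clm_apply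
      continuous_const).integrable_of_hasCompactSupport (hc.fderiv_apply ℝ w)
  have by_parts := integral_mul_fderiv_eq_neg_fderiv_mul_of_integrable (μ := μ)
    (f := fun _ => 1) (g := f) (v := w) (by simp) (by simpa using integrable_fderiv)
    (by simpa using hf.continuous.integrable_of_hasCompactSupport hc) (by simp)
    fun x _ => hf.differentiable one_ne_zero x
  simpa using by_parts

lemma lintegral_eq_lintegral_toSphere [Nontrivial E] {G : E → ℝ≥0∞} (hG : Measurable G) :
    ∫⁻ x, G x ∂μ = ∫⁻ ω : sphere (0 : E) 1, (∫⁻ t in Ioi (0 : ℝ),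
      ENNReal.ofReal (t ^ (Module.finrank ℝ E - 1)) * G (t • (ω : E))) ∂μ.toSphere := by
  have hG' : Measurable fun z : sphere (0 : E) 1 × Ioi (0 : ℝ) => G (z.2.1 • (z.1 : E)) :=
    hG.comp (by fun_prop)
  have polar_eq (x : ({0}ᶜ : Set E)) : (homeomorphUnitSphereProd E x).2.1 •
      ((homeomorphUnitSphereProd E x).1 : E) = x := by
    simp [smul_smul, norm_ne_zero_iff.2 x.2]
  calc ∫⁻ x, G x ∂μ
      = ∫⁻ x : ({0}ᶜ : Set E), G x ∂μ.comap (↑) := by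
        rw [lintegral_subtype_comap (measurableSet_singleton _).compl G, restrict_compl_singleton]
    _ = ∫⁻ z : sphere (0 : E) 1 × Ioi (0 : ℝ), G (z.2.1 • (z.1 : E))
          ∂μ.toSphere.prod (.volumeIoiPow (Module.finrank ℝ E - 1)) := by
        rw [← μ.measurePreserving_homeomorphUnitSphereProd.lintegral_comp hG']
        simp only [polar_eq]
    _ = _ := by
        rw [lintegral_prod _ hG'.aemeasurable]
        refine lintegral_congr fun ω => ?_
        have hGω : Measurable fun t : Ioi (0 : ℝ) => G (t.1 • (ω : E)) :=
          hG'.comp measurable_prodMk_left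
        rw [Measure.volumeIoiPow, lintegral_withDensity_eq_lintegral_mul _ (by fun_prop) hGω,
          ← lintegral_subtype_comap measurableSet_Ioi]
        rfl

end Haar

section LightCone

variable {E : Type*} [NormedAddCommGroup E]

/-- The parametrization of the forward light cone `{t = ‖x‖}` of `ℝ × E` by space. -/
def lightCone (x : E) : ℝ × E := (‖x‖, x)

@[simp]
lemma lightCone_zero : lightCone (0 : E) = 0 := by simp [lightCone]

lemma continuous_lightCone : Continuous (lightCone (E := E)) :=
  continuous_norm.prodMk continuous_id

lemma isClosedEmbedding_lightCone : Topology.IsClosedEmbedding (lightCone (E := E)) :=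
  Function.LeftInverse.isClosedEmbedding (f := Prod.snd) (fun _ => rfl) continuous_snd
    continuous_lightCone

lemma measurableEmbedding_lightCone [MeasurableSpace E] [BorelSpace E] :
    MeasurableEmbedding (lightCone (E := E)) :=
  isClosedEmbedding_lightCone.measurableEmbedding

variable [InnerProductSpace ℝ E]

lemma fderiv_norm_apply {x : E} (hx : x ≠ 0) (u : E) : fderiv ℝ norm x u = ⟪x, u⟫ / ‖x‖ := by
  have hd : DifferentiableAt ℝ norm x := differentiableAt_id.norm ℝ hx
  have hsq : 2 * (‖x‖ * fderiv ℝ norm x u) = 2 * ⟪x, u⟫ := by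
    have := congr($((hd.hasFDerivAt.pow 2).unique (hasStrictFDerivAt_norm_sq x).hasFDerivAt) u)
    simpa [mul_assoc] using this
  rw [eq_div_iff (norm_ne_zero_iff.2 hx)]
  linarith

lemma contDiffAt_lightCone {n : WithTop ℕ∞} {x : E} (hx : x ≠ 0) : ContDiffAt ℝ n lightCone x :=
  (contDiffAt_norm ℝ hx).prodMk contDiffAt_id

lemma fderiv_comp_lightCone {h : ℝ × E → ℝ} {x : E} (hx : x ≠ 0)
    (hh : DifferentiableAt ℝ h (lightCone x)) (u : E) :
    fderiv ℝ (h ∘ lightCone) x u = dirDeriv (⟪x, u⟫ / ‖x‖, u) h (lightCone x) := by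
  have hd : DifferentiableAt ℝ norm x := differentiableAt_id.norm ℝ hx
  have hcone : HasFDerivAt lightCone ((fderiv ℝ norm x).prod (.id ℝ E)) x :=
    hd.hasFDerivAt.prodMk (hasFDerivAt_id x)
  rw [(hh.hasFDerivAt.comp x hcone).fderiv]
  simp [dirDeriv, fderiv_norm_apply hx]

/-- The Minkowski product `w₀ t - ⟪w₁, x⟫` of `w = (w₀, w₁)` with `(t, x)`. -/
def minkowski (w : ℝ × E) : ℝ × E →L[ℝ] ℝ :=
  w.1 • .fst ℝ ℝ E - (innerSL ℝ w.2).comp (.snd ℝ ℝ E)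

lemma minkowski_apply (w p : ℝ × E) : minkowski w p = w.1 * p.1 - ⟪w.2, p.2⟫ := by
  simp [minkowski]

lemma minkowski_lightCone_pos {w : ℝ × E} (hw : ‖w.2‖ < w.1) {x : E} (hx : x ≠ 0) :
    0 < minkowski w (lightCone x) := by
  rw [minkowski_apply, sub_pos]
  calc ⟪w.2, x⟫ ≤ ‖w.2‖ * ‖x‖ := real_inner_le_norm _ _
    _ < w.1 * ‖x‖ := by gcongr

lemma dirDeriv_minkowski (u w p : ℝ × E) : dirDeriv u (minkowski w) p = minkowski w u := by
  rw [dirDeriv, ContinuousLinearMap.fderiv]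

/-- The functions `α_w = ⟪w, ·⟫ / ⟪e, ·⟫` (Minkowski products) by which the derivative of the cone
measure along `w` is expressed through its derivative along `e`. -/
def coneRatio (e w p : ℝ × E) : ℝ := minkowski w p / minkowski e p

lemma contDiffAt_coneRatio {n : WithTop ℕ∞} {e p : ℝ × E} (he : minkowski e p ≠ 0) (w : ℝ × E) :
    ContDiffAt ℝ n (coneRatio e w) p :=
  (minkowski w).contDiff.contDiffAt.div (minkowski e).contDiff.contDiffAt he

lemma fderiv_comp_lightCone_eq_dirDeriv_sub {h : ℝ × E → ℝ} {x : E} (hx : x ≠ 0)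
    (hh : DifferentiableAt ℝ h (lightCone x)) (w : ℝ × E) :
    fderiv ℝ (h ∘ lightCone) x w.2
      = dirDeriv w h (lightCone x)
        - ‖x‖⁻¹ * minkowski w (lightCone x) * dirDeriv (1, 0) h (lightCone x) := by
  have hr : ‖x‖ ≠ 0 := norm_ne_zero_iff.2 hx
  have tangent : (⟪x, w.2⟫ / ‖x‖, w.2)
      = w - (‖x‖⁻¹ * minkowski w (lightCone x)) • ((1 : ℝ), (0 : E)) := by
    have time_eq : ⟪x, w.2⟫ / ‖x‖ = w.1 - ‖x‖⁻¹ * minkowski w (lightCone x) := by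
      rw [minkowski_apply, lightCone, real_inner_comm]
      field_simp
      ring
    ext <;> simp [time_eq]
  rw [fderiv_comp_lightCone hx hh, tangent, dirDeriv, map_sub, map_smul, smul_eq_mul, dirDeriv,
    dirDeriv]

lemma dirDeriv_fst_mul_sub_dirDeriv_minkowski_mul {h : ℝ × E → ℝ} {x : E} (hx : x ≠ 0)
    (hh : DifferentiableAt ℝ h (lightCone x)) (w : ℝ × E) :
    ‖x‖⁻¹ * (dirDeriv w (Prod.fst * h) (lightCone x)
        - dirDeriv (1, 0) (⇑(minkowski w) * h) (lightCone x))
      = fderiv ℝ (h ∘ lightCone) x w.2 := by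
  have hr : ‖x‖ ≠ 0 := norm_ne_zero_iff.2 hx
  have fst_deriv : dirDeriv w Prod.fst (lightCone x) = w.1 := by simp [dirDeriv, fderiv_fst]
  rw [dirDeriv_mul differentiableAt_fst hh,
    dirDeriv_mul (minkowski w).differentiableAt hh, dirDeriv_minkowski, fst_deriv,
    fderiv_comp_lightCone_eq_dirDeriv_sub hx hh]
  simp only [minkowski_apply, lightCone, inner_zero_right]
  field_simp
  ring

end LightCone

section ConeTest

variable {E : Type*} [NormedAddCommGroup E] [InnerProductSpace ℝ E] {f g : ℝ × E → ℝ}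
  {m n : WithTop ℕ∞}

/-- Test functions for distributions on `(ℝ × E) \ {0}` carried by the light cone: smoothness is
only asked at the points of the cone, so that the coefficients `coneRatio e w` are multipliers. -/
structure IsConeTest (n : WithTop ℕ∞) (f : ℝ × E → ℝ) : Prop where
  contDiffAt : ∀ x : E, x ≠ 0 → ContDiffAt ℝ n f (lightCone x)
  hasCompactSupport : HasCompactSupport f
  zero_notMem_tsupport : 0 ∉ tsupport f

namespace IsConeTest

lemma of_le (hf : IsConeTest n f) (hmn : m ≤ n) : IsConeTest m f where
  __ := hf
  contDiffAt x hx := (hf.contDiffAt x hx).of_le hmn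

lemma mul_left (hf : IsConeTest n f) (hg : ∀ x : E, x ≠ 0 → ContDiffAt ℝ n g (lightCone x)) :
    IsConeTest n (g * f) where
  contDiffAt x hx := (hg x hx).mul (hf.contDiffAt x hx)
  hasCompactSupport := hf.hasCompactSupport.mul_left
  zero_notMem_tsupport h := hf.zero_notMem_tsupport (tsupport_mul_subset_right h)

lemma inv_fst_mul (hf : IsConeTest n f) : IsConeTest n ((fun p => p.1⁻¹) * f) :=
  hf.mul_left fun _ hx => contDiffAt_fst.inv (norm_ne_zero_iff.2 hx)

protected lemma dirDeriv (hf : IsConeTest n f) (hmn : m + 1 ≤ n) (w : ℝ × E) :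
    IsConeTest m (dirDeriv w f) where
  contDiffAt x hx := contDiffAt_dirDeriv (hf.contDiffAt x hx) hmn w
  hasCompactSupport := hf.hasCompactSupport.fderiv_apply ℝ w
  zero_notMem_tsupport h := hf.zero_notMem_tsupport (tsupport_fderiv_apply_subset ℝ w h)

lemma comp_lightCone_eventuallyEq_zero (hf : IsConeTest n f) : f ∘ lightCone =ᶠ[𝓝 0] 0 :=
  (continuous_lightCone.tendsto' 0 0 lightCone_zero).eventually
    (notMem_tsupport_iff_eventuallyEq.1 hf.zero_notMem_tsupport)

lemma contDiff_comp_lightCone (hf : IsConeTest n f) : ContDiff ℝ n (f ∘ lightCone) := by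
  refine contDiff_iff_contDiffAt.2 fun x => ?_
  rcases eq_or_ne x 0 with rfl | hx
  · exact contDiffAt_const.congr_of_eventuallyEq hf.comp_lightCone_eventuallyEq_zero
  · exact (hf.contDiffAt x hx).comp x (contDiffAt_lightCone hx)

lemma hasCompactSupport_comp_lightCone (hf : IsConeTest n f) :
    HasCompactSupport (f ∘ lightCone) :=
  hf.hasCompactSupport.comp_isClosedEmbedding isClosedEmbedding_lightCone

end IsConeTest

end ConeTest

section ConeMeasure

variable {E : Type*} [NormedAddCommGroup E] [InnerProductSpace ℝ E] [FiniteDimensional ℝ E]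
  [MeasurableSpace E] [BorelSpace E]

variable (E) in
/-- The Lorentz invariant measure on the forward light cone of `ℝ × E`, which is `dx / ‖x‖` in the
parametrization `lightCone`. -/
def coneMeasure : Measure (ℝ × E) :=
  (volume.withDensity fun x : E => ENNReal.ofReal ‖x‖⁻¹).map lightCone

lemma lintegral_coneMeasure {F : ℝ × E → ℝ≥0∞} (hF : Measurable F) :
    ∫⁻ p, F p ∂coneMeasure E = ∫⁻ x : E, ENNReal.ofReal ‖x‖⁻¹ * F (lightCone x) := by
  rw [coneMeasure, measurableEmbedding_lightCone.lintegral_map,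
    lintegral_withDensity_eq_lintegral_mul _ (by fun_prop)
      (show Measurable fun x => F (lightCone x) from hF.comp continuous_lightCone.measurable)]
  rfl

lemma integral_coneMeasure (f : ℝ × E → ℝ) :
    ∫ p, f p ∂coneMeasure E = ∫ x : E, ‖x‖⁻¹ * f (lightCone x) := by
  rw [coneMeasure, measurableEmbedding_lightCone.integral_map,
    integral_withDensity_eq_integral_toReal_smul (by fun_prop)
      (.of_forall fun _ => ENNReal.ofReal_lt_top)]
  simp [ENNReal.toReal_ofReal]

lemma integral_coneMeasure_congr {f g : ℝ × E → ℝ}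
    (h : ∀ x : E, x ≠ 0 → f (lightCone x) = g (lightCone x)) :
    ∫ p, f p ∂coneMeasure E = ∫ p, g p ∂coneMeasure E := by
  rw [integral_coneMeasure, integral_coneMeasure]
  refine integral_congr_ae (.of_forall fun x => ?_)
  rcases eq_or_ne x 0 with rfl | hx
  · simp
  · simp only [h x hx]

lemma integrable_coneMeasure_iff {f : ℝ × E → ℝ} :
    Integrable f (coneMeasure E) ↔ Integrable fun x : E => ‖x‖⁻¹ * f (lightCone x) := by
  rw [coneMeasure, measurableEmbedding_lightCone.integrable_map_iff,
    integrable_withDensity_iff_integrable_smul' (by fun_prop)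
      (.of_forall fun _ => ENNReal.ofReal_lt_top)]
  simp [ENNReal.toReal_ofReal]

lemma IsConeTest.integrable {f : ℝ × E → ℝ} (hf : IsConeTest 0 f) :
    Integrable f (coneMeasure E) :=
  integrable_coneMeasure_iff.2 <|
    hf.inv_fst_mul.contDiff_comp_lightCone.continuous.integrable_of_hasCompactSupport
      hf.inv_fst_mul.hasCompactSupport_comp_lightCone

theorem integral_dirDeriv_fst_mul_coneMeasure {h : ℝ × E → ℝ} (hh : IsConeTest 1 h) (w : ℝ × E) :
    ∫ p, dirDeriv w (Prod.fst * h) p ∂coneMeasure E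
      = ∫ p, dirDeriv (1, 0) (⇑(minkowski w) * h) p ∂coneMeasure E := by
  have integrable_left := ((hh.mul_left fun _ _ => contDiffAt_fst).dirDeriv (m := 0)
    (by simp) w).integrable
  have integrable_right := ((hh.mul_left fun _ _ => (minkowski w).contDiff.contDiffAt).dirDeriv
    (m := 0) (by simp) (1, 0)).integrable
  rw [← sub_eq_zero, ← integral_sub integrable_left integrable_right, integral_coneMeasure,
    ← integral_fderiv_apply_eq_zero volume hh.contDiff_comp_lightCone
      hh.hasCompactSupport_comp_lightCone w.2]
  refine integral_congr_ae (.of_forall fun x => ?_)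
  rcases eq_or_ne x 0 with rfl | hx
  · simp [hh.comp_lightCone_eventuallyEq_zero.fderiv_eq]
  · exact dirDeriv_fst_mul_sub_dirDeriv_minkowski_mul hx
      ((hh.contDiffAt x hx).differentiableAt one_ne_zero) w

theorem integral_dirDeriv_coneMeasure {ψ : ℝ × E → ℝ} (hψ : IsConeTest 1 ψ) (w : ℝ × E) :
    ∫ p, dirDeriv w ψ p ∂coneMeasure E
      = ∫ p, dirDeriv (1, 0) (⇑(minkowski w) * ((fun p => p.1⁻¹) * ψ)) p ∂coneMeasure E := by
  rw [← integral_dirDeriv_fst_mul_coneMeasure hψ.inv_fst_mul w]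
  refine integral_coneMeasure_congr fun x hx => dirDeriv_congr ?_ w
  have fst_ne_zero : ∀ᶠ p in 𝓝 (lightCone x), p.1 ≠ 0 :=
    continuousAt_fst.eventually_ne (norm_ne_zero_iff.2 hx)
  filter_upwards [fst_ne_zero] with p hp
  exact (mul_inv_cancel_left₀ hp (ψ p)).symm

theorem integral_dirDeriv_eq_integral_dirDeriv_coneRatio_mul {e : ℝ × E}
    (he : ∀ x : E, x ≠ 0 → minkowski e (lightCone x) ≠ 0) {ψ : ℝ × E → ℝ} (hψ : IsConeTest 1 ψ)
    (w : ℝ × E) :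
    ∫ p, dirDeriv w ψ p ∂coneMeasure E
      = ∫ p, dirDeriv e (coneRatio e w * ψ) p ∂coneMeasure E := by
  have hαψ := hψ.mul_left fun x hx => contDiffAt_coneRatio (he x hx) w
  rw [integral_dirDeriv_coneMeasure hψ w, integral_dirDeriv_coneMeasure hαψ e]
  refine integral_coneMeasure_congr fun x hx => dirDeriv_congr ?_ (1, 0)
  have minkowski_ne_zero : ∀ᶠ p in 𝓝 (lightCone x), minkowski e p ≠ 0 :=
    (minkowski e).continuous.continuousAt.eventually_ne (he x hx)
  filter_upwards [minkowski_ne_zero] with p hp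
  simp only [Pi.mul_apply, coneRatio]
  field_simp

theorem division_lemma_second_order_general {e : ℝ × E}
    (he : ∀ x : E, x ≠ 0 → minkowski e (lightCone x) ≠ 0) {φ : ℝ × E → ℝ} (hφ : IsConeTest 2 φ)
    (u w : ℝ × E) :
    ∫ p, dirDeriv u (dirDeriv w φ) p ∂coneMeasure E
      = ∫ p, (coneRatio e u p * coneRatio e w p * dirDeriv e (dirDeriv e φ) p
          - (dirDeriv u (coneRatio e w) p - dirDeriv e (coneRatio e u * coneRatio e w) p
              - coneRatio e u p * dirDeriv e (coneRatio e w) p) * dirDeriv e φ p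
          + (-dirDeriv u (dirDeriv e (coneRatio e w)) p
              + dirDeriv e (coneRatio e u * dirDeriv e (coneRatio e w)) p) * φ p)
        ∂coneMeasure E := by
  have hα {n : WithTop ℕ∞} (k : ℝ × E) (x : E) (hx : x ≠ 0) :
      ContDiffAt ℝ n (coneRatio e k) (lightCone x) := contDiffAt_coneRatio (he x hx) k
  have hαφ : IsConeTest 1 (dirDeriv e (coneRatio e w * φ)) :=
    (hφ.mul_left (hα w)).dirDeriv (by norm_num) e
  have hα'φ : IsConeTest 1 (dirDeriv u (coneRatio e w) * φ) :=
    (hφ.of_le one_le_two).mul_left fun x hx =>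
      contDiffAt_dirDeriv (hα (n := 2) w x hx) (by norm_num) u
  calc ∫ p, dirDeriv u (dirDeriv w φ) p ∂coneMeasure E
      = ∫ p, dirDeriv w (dirDeriv u φ) p ∂coneMeasure E :=
        integral_coneMeasure_congr fun x hx => dirDeriv_comm (hφ.contDiffAt x hx) u w
    _ = ∫ p, dirDeriv e (coneRatio e w * dirDeriv u φ) p ∂coneMeasure E :=
        integral_dirDeriv_eq_integral_dirDeriv_coneRatio_mul he (hφ.dirDeriv (by norm_num) u) w
    _ = ∫ p, (dirDeriv u (dirDeriv e (coneRatio e w * φ)) p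
          - dirDeriv e (dirDeriv u (coneRatio e w) * φ) p) ∂coneMeasure E :=
        integral_coneMeasure_congr fun x hx =>
          dirDeriv_mul_dirDeriv (hα w x hx) (hφ.contDiffAt x hx) u e
    _ = ∫ p, (dirDeriv e (coneRatio e u * dirDeriv e (coneRatio e w * φ)) p
          - dirDeriv e (dirDeriv u (coneRatio e w) * φ) p) ∂coneMeasure E := by
        rw [integral_sub (hαφ.dirDeriv (by simp) u).integrable
            (hα'φ.dirDeriv (by simp) e).integrable,
          integral_dirDeriv_eq_integral_dirDeriv_coneRatio_mul he hαφ u,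
          integral_sub ((hαφ.mul_left (hα u)).dirDeriv (by simp) e).integrable
            (hα'φ.dirDeriv (by simp) e).integrable]
    _ = _ := integral_coneMeasure_congr fun x hx =>
        dirDeriv_mul_dirDeriv_mul_sub ((hα (n := 1) u x hx).differentiableAt one_ne_zero)
          (hα w x hx) (hφ.contDiffAt x hx) u e

end ConeMeasure

section FundamentalSolution

lemma lintegral_Ymeas {F : ℝ × E3 → ℝ≥0∞} (hF : Measurable F) :
    ∫⁻ p, F p ∂Ymeas = ∫⁻ ω : sphere (0 : E3) 1, (∫⁻ t in Ioi (0 : ℝ),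
      ENNReal.ofReal (t / (4 * π)) * F (t, t • (ω : E3))) ∂sphMeasure := by
  have : IsFiniteMeasure sphMeasure := by unfold sphMeasure; infer_instance
  have hpolar : Measurable fun q : ℝ × sphere (0 : E3) 1 => (q.1, q.1 • (q.2 : E3)) := by
    fun_prop
  have hFpolar : Measurable fun q : ℝ × sphere (0 : E3) 1 => F (q.1, q.1 • (q.2 : E3)) :=
    hF.comp hpolar
  rw [Ymeas, lintegral_map hF hpolar, lintegral_prod_symm' _ hFpolar]
  refine lintegral_congr fun ω => ?_
  have hFω : Measurable fun t : ℝ => F (t, t • (ω : E3)) := hF.comp (by fun_prop)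
  rw [lintegral_withDensity_eq_lintegral_mul _ (by fun_prop) hFω]
  rfl

lemma Ymeas_eq_smul_coneMeasure : Ymeas = ENNReal.ofReal (4 * π)⁻¹ • coneMeasure E3 := by
  refine Measure.ext_of_lintegral _ fun F hF => ?_
  have hFcone : Measurable fun x : E3 => ENNReal.ofReal ‖x‖⁻¹ * F (lightCone x) :=
    .mul (by fun_prop) (hF.comp continuous_lightCone.measurable)
  rw [lintegral_smul_measure, lintegral_coneMeasure hF, smul_eq_mul,
    ← lintegral_const_mul _ hFcone,
    lintegral_eq_lintegral_toSphere volume (hFcone.const_mul _), lintegral_Ymeas hF]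
  refine lintegral_congr fun ω => setLIntegral_congr_fun measurableSet_Ioi fun t ht => ?_
  have ht : 0 < t := ht
  have norm_smul_eq : ‖t • (ω : E3)‖ = t := by simp [norm_smul, abs_of_pos ht]
  have finrank_sub_one : Module.finrank ℝ E3 - 1 = 2 := by simp
  have density_eq : ENNReal.ofReal (t / (4 * π))
      = ENNReal.ofReal (t ^ 2) * (ENNReal.ofReal (4 * π)⁻¹ * ENNReal.ofReal t⁻¹) := by
    rw [← ENNReal.ofReal_mul (by positivity), ← ENNReal.ofReal_mul (by positivity)]
    congr 1
    field_simp
  simp only [lightCone, norm_smul_eq, finrank_sub_one, density_eq, mul_assoc]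

lemma integral_Ymeas (f : ℝ × E3 → ℝ) :
    ∫ p, f p ∂Ymeas = (4 * π)⁻¹ * ∫ p, f p ∂coneMeasure E3 := by
  rw [Ymeas_eq_smul_coneMeasure, integral_smul_measure, ENNReal.toReal_ofReal (by positivity),
    smul_eq_mul]

lemma alphaF_eq_coneRatio (v : E3) (i : Fin 4) : alphaF v i = coneRatio (1, v) (dir4 i) := by
  funext p
  cases i using Fin.cases with
  | zero => simp [alphaF, dir4, coneRatio, minkowski_apply, real_inner_comm]
  | succ k =>
    have he3 : ⟪e3 k, p.2⟫ = p.2 k := by simp [e3, EuclideanSpace.inner_single_left]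
    rw [alphaF, dir4, coneRatio, minkowski_apply, minkowski_apply, ← neg_div_neg_eq]
    simp [he3, real_inner_comm]

end FundamentalSolution

/-- **Division lemma, second order (away from the origin)**: for `|v| < 1` and
`i,j ∈ {0,1,2,3}`, for every `φ ∈ C_c^∞(ℝ⁴ \ {0})` one has
`⟨Y, ∂_i∂_jφ⟩ = ⟨Y, b⁰_{ij} T²φ - b¹_{ij} Tφ + b²_{ij} φ⟩`; i.e.
`∂²_{ij}Y = T²(b⁰_{ij}Y) + T(b¹_{ij}Y) + b²_{ij}Y` in the sense of distributions on
`ℝ⁴ \ {0}`. -/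
theorem division_lemma_second_order (v : E3) (hv : ‖v‖ < 1) (i j : Fin 4)
    (φ : ℝ × E3 → ℝ) (hφ : ContDiff ℝ (⊤ : ℕ∞) φ) (hφc : HasCompactSupport φ)
    (hφ0 : ((0 : ℝ), (0 : E3)) ∉ tsupport φ) :
    ∫ p : ℝ × E3, fderiv ℝ (fun q => fderiv ℝ φ q (dir4 j)) p (dir4 i) ∂Ymeas
      = ∫ p : ℝ × E3,
          (b0F v i j p * Tstr v (Tstr v φ) p - b1F v i j p * Tstr v φ p
            + b2F v i j p * φ p) ∂Ymeas := by
  have hφ' : IsConeTest 2 φ := ⟨fun _ _ => hφ.contDiffAt.of_le (by norm_cast), hφc, hφ0⟩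
  have division := division_lemma_second_order_general (e := (1, v))
    (fun x hx => (minkowski_lightCone_pos hv hx).ne') hφ' (dir4 i) (dir4 j)
  rw [← alphaF_eq_coneRatio, ← alphaF_eq_coneRatio] at division
  rw [integral_Ymeas, integral_Ymeas]
  -- `Tstr v` and the coefficients unfold to expressions in `dirDeriv (1, v)`.
  exact congrArg _ division
end
end

section
/- Vanishing spherical mean of the degree −2 coefficients in the division lemma: let v ∈ ℝ³ with |v| < 1 and i,j ∈ {0,1,2,3}. With T = ∂_t + v·∇_x and b²_{ij} = −∂_i(Tα_j) + T(α_i Tα_j), one has ∫_{S²} b²_{ij}(1,ω) dσ(ω) = 0, where dσ is the rotation-invariant surface measure on the unit sphere S² ⊂ ℝ³ and b²_{ij}(1,ω) denotes the value of b²_{ij} at the point (t,x) = (1,ω). -/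
open MeasureTheory Real Set Filter Metric RealInnerProductSpace
open scoped ENNReal NNReal Topology

noncomputable section

/-!
Integrating `∂_w (χ(|x|) G)` over space in polar coordinates, for `G` homogeneous of degree `1 - n`
on `ℝⁿ` and `χ` compactly supported in `(0, ∞)`, shows that `∂_w G` has mean zero on the sphere:
the radial integral of the term containing `χ'` vanishes.

On `ℝ × ℝⁿ` let `⟨a, p⟩ = a₀ t - a' · x` be the Minkowski form. If `⟨a, ·⟩ f = ⟨d, ·⟩ h` near the
light cone `t = |x|`, the field `f a - h d` is tangent to the cone, so its divergence
`∂_a f - ∂_d h` there can be computed from the restrictions of `f` and `h`: it is `|x|` times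
`∂_{a'} (f / |x|) - ∂_{d'} (h / |x|)`. For `f` and `h` of degree `2 - n` this has mean zero on the
sphere. Since `α_i = ⟨dir_i, ·⟩ / ⟨(1, v), ·⟩`, the pair `f = α_i Tα_j`, `h = Tα_j` is of this kind,
of degree `-1 = 2 - 3`.
-/

/-- Positive homogeneity of integer degree `k` of a real function on a vector space. Functions such
as quotients of linear forms keep this property at their poles because `x / 0 = 0`. -/
def IsPosHomogeneous {E : Type*} [SMul ℝ E] (k : ℤ) (f : E → ℝ) : Prop :=
  ∀ ⦃r : ℝ⦄, 0 < r → ∀ x, f (r • x) = r ^ k * f x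

namespace IsPosHomogeneous

lemma mul {E : Type*} [SMul ℝ E] {k l : ℤ} {f g : E → ℝ} (hf : IsPosHomogeneous k f)
    (hg : IsPosHomogeneous l g) : IsPosHomogeneous (k + l) fun x => f x * g x := fun r hr x => by
  simp only [hf hr, hg hr, zpow_add₀ hr.ne']
  ring

lemma fderiv_apply {E : Type*} [NormedAddCommGroup E] [NormedSpace ℝ E] {k : ℤ} {f : E → ℝ}
    (hf : IsPosHomogeneous k f) (w : E) :
    IsPosHomogeneous (k - 1) fun x => fderiv ℝ f x w := fun r hr x => by
  have hscale : (fun y => f (r • y)) = r ^ k • f := funext fun y => hf hr y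
  have hderiv : r • fderiv ℝ f (r • x) = r ^ k • fderiv ℝ f x := by
    rw [← fderiv_comp_smul, hscale, fderiv_const_smul_field, Pi.smul_apply]
  have hderiv_apply : r * fderiv ℝ f (r • x) w = r ^ k * fderiv ℝ f x w :=
    DFunLike.congr_fun hderiv w
  rw [zpow_sub_one₀ hr.ne', mul_right_comm, ← hderiv_apply]
  field_simp

end IsPosHomogeneous

section Polar

lemma hasCompactSupport_comp_norm {E : Type*} [SeminormedAddCommGroup E] [ProperSpace E]
    {χ : ℝ → ℝ} (hχ : HasCompactSupport χ) :
    HasCompactSupport fun x : E => χ ‖x‖ := by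
  rw [hasCompactSupport_iff_eventuallyEq, coclosedCompact_eq_cocompact] at hχ ⊢
  exact (tendsto_norm_cocompact_atTop (E := E)).eventually (atTop_le_cocompact hχ)

lemma integrable_fderiv_of_hasCompactSupport {E F : Type*} [NormedAddCommGroup E]
    [NormedSpace ℝ E] [MeasurableSpace E] [OpensMeasurableSpace E] [NormedAddCommGroup F]
    [NormedSpace ℝ F] (μ : Measure E) [IsFiniteMeasureOnCompacts μ] {f : E → F}
    (hf : ContDiff ℝ 1 f) (hsupp : HasCompactSupport f) (w : E) :
    Integrable (fun x => fderiv ℝ f x w) μ :=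
  ((hf.continuous_fderiv one_ne_zero).clm_apply continuous_const).integrable_of_hasCompactSupport
    (hsupp.fderiv_apply ℝ w)

lemma integral_volumeIoiPow {F : Type*} [NormedAddCommGroup F] [NormedSpace ℝ F] (n : ℕ)
    (f : ℝ → F) :
    ∫ r : Ioi (0 : ℝ), f r ∂.volumeIoiPow n = ∫ r in Ioi (0 : ℝ), r ^ n • f r := by
  simp only [Measure.volumeIoiPow, ENNReal.ofReal]
  rw [integral_withDensity_eq_integral_smul
      (measurable_subtype_coe.pow_const _).real_toNNReal,
    integral_subtype_comap measurableSet_Ioi fun r => Real.toNNReal (r ^ n) • f r]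
  refine setIntegral_congr_fun measurableSet_Ioi fun r hr => ?_
  simp only [NNReal.smul_def, Real.coe_toNNReal _ (pow_nonneg (mem_Ioi.1 hr).le n)]

variable {E F : Type*} [NormedAddCommGroup E] [NormedSpace ℝ E] [FiniteDimensional ℝ E]
  [MeasurableSpace E] [BorelSpace E] [NormedAddCommGroup F] [NormedSpace ℝ F]
  (μ : Measure E) [μ.IsAddHaarMeasure]

lemma integral_eq_integral_sphere_integral_Ioi [Nontrivial E] {f : E → F} (hf : Integrable f μ) :
    ∫ x, f x ∂μ = ∫ ω : sphere (0 : E) 1, (∫ r in Ioi (0 : ℝ),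
      r ^ (Module.finrank ℝ E - 1) • f (r • (ω : E))) ∂μ.toSphere := by
  let polar : sphere (0 : E) 1 × Ioi (0 : ℝ) → F := fun q => f (q.2.1 • (q.1 : E))
  have hpolar (x : ({0}ᶜ : Set E)) : polar (homeomorphUnitSphereProd E x) = f x := by
    simp only [polar, homeomorphUnitSphereProd_apply_fst_coe,
      homeomorphUnitSphereProd_apply_snd_coe, smul_inv_smul₀ (norm_ne_zero_iff.2 x.2)]
  have hmp := μ.measurePreserving_homeomorphUnitSphereProd
  have hemb := (homeomorphUnitSphereProd E).measurableEmbedding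
  have hint : Integrable polar
      (μ.toSphere.prod (.volumeIoiPow (Module.finrank ℝ E - 1))) := by
    rw [← hmp.integrable_comp_emb hemb]
    refine Integrable.congr (f := fun x : ({0}ᶜ : Set E) => f x) ?_
      (.of_forall fun x => (hpolar x).symm)
    exact ((MeasurableEmbedding.subtype_coe
      (measurableSet_singleton _).compl).integrableOn_range_iff_comap.1 hf.integrableOn)
  calc
    ∫ x, f x ∂μ = ∫ x : ({0}ᶜ : Set E), f x ∂μ.comap (↑) := by
      rw [integral_subtype_comap (measurableSet_singleton _).compl, restrict_compl_singleton]
    _ = ∫ q, polar q ∂μ.toSphere.prod (.volumeIoiPow (Module.finrank ℝ E - 1)) := by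
      rw [← hmp.integral_comp hemb]
      exact integral_congr_ae (.of_forall fun x => (hpolar x).symm)
    _ = ∫ ω, ∫ r, polar (ω, r) ∂.volumeIoiPow (Module.finrank ℝ E - 1) ∂μ.toSphere :=
      integral_prod _ hint
    _ = _ := by
      refine integral_congr_ae (.of_forall fun ω => ?_)
      exact integral_volumeIoiPow _ fun r => f (r • (ω : E))

lemma integral_fderiv_eq_zero_of_hasCompactSupport {f : E → F} (hf : ContDiff ℝ 1 f)
    (hsupp : HasCompactSupport f) (w : E) : ∫ x, fderiv ℝ f x w ∂μ = 0 := by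
  have hderiv := integrable_fderiv_of_hasCompactSupport μ hf hsupp w
  have hparts := integral_smul_fderiv_eq_neg_fderiv_smul_of_integrable (μ := μ)
    (f := fun _ => (1 : ℝ)) (g := f) (v := w) (by simp) (by simpa using hderiv)
    (by simpa using hf.continuous.integrable_of_hasCompactSupport hsupp)
    (fun x _ => differentiableAt_const 1) fun x _ => hf.differentiable one_ne_zero x
  simpa using hparts

lemma integrable_sphere_fderiv {G : E → F} (hG : ∀ x ≠ 0, ContDiffAt ℝ 1 G x) (w : E) :
    Integrable (fun ω : sphere (0 : E) 1 => fderiv ℝ G (ω : E) w) μ.toSphere := by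
  have hcont : Continuous fun ω : sphere (0 : E) 1 => fderiv ℝ G (ω : E) w :=
    continuous_iff_continuousAt.2 fun ω =>
      (((hG ω (ne_zero_of_mem_unit_sphere ω)).continuousAt_fderiv one_ne_zero).comp
        continuous_subtype_val.continuousAt).clm_apply continuousAt_const
  exact hcont.integrable_of_hasCompactSupport (.of_compactSpace _)

end Polar

section SphericalMean

variable {E : Type*} [NormedAddCommGroup E] [InnerProductSpace ℝ E]

lemma hasFDerivAt_norm_of_ne_zero {x : E} (hx : x ≠ 0) :
    HasFDerivAt (fun y : E => ‖y‖) (‖x‖⁻¹ • innerSL ℝ x) x := by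
  have hsqrt := (hasStrictFDerivAt_norm_sq x).hasFDerivAt.sqrt
    (pow_ne_zero 2 (norm_ne_zero_iff.2 hx))
  simp only [Real.sqrt_sq (norm_nonneg _)] at hsqrt
  refine hsqrt.congr_fderiv (ContinuousLinearMap.ext fun w => ?_)
  simp only [smul_apply, smul_eq_mul, nsmul_eq_mul, Nat.cast_ofNat]
  field_simp

lemma contDiff_comp_norm_mul {n : WithTop ℕ∞} {χ : ℝ → ℝ} {G : E → ℝ} (hχ : ContDiff ℝ n χ)
    (hχ_zero : χ =ᶠ[𝓝 0] 0) (hG : ∀ x ≠ 0, ContDiffAt ℝ n G x) :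
    ContDiff ℝ n fun x => χ ‖x‖ * G x := by
  refine contDiff_iff_contDiffAt.2 fun x => ?_
  rcases eq_or_ne x 0 with rfl | hx
  · refine contDiffAt_const (c := (0 : ℝ)).congr_of_eventuallyEq ?_
    filter_upwards [tendsto_norm_zero.eventually hχ_zero] with y hy
    rw [hy, Pi.zero_apply, zero_mul]
  · exact (hχ.contDiffAt.comp x (contDiffAt_norm ℝ hx)).mul (hG x hx)

lemma fderiv_comp_norm_mul_smul_sphere {k : ℤ} {χ : ℝ → ℝ} {G : E → ℝ} {r : ℝ}
    (hχ : DifferentiableAt ℝ χ r) (hG : ∀ x ≠ 0, DifferentiableAt ℝ G x)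
    (hhom : IsPosHomogeneous k G) (hr : 0 < r) (ω : sphere (0 : E) 1) (w : E) :
    fderiv ℝ (fun x => χ ‖x‖ * G x) (r • (ω : E)) w =
      r ^ k * (r⁻¹ * χ r * fderiv ℝ G ω w + deriv χ r * (⟪(ω : E), w⟫ * G ω)) := by
  have hne : r • (ω : E) ≠ 0 := smul_ne_zero hr.ne' (ne_zero_of_mem_unit_sphere ω)
  have hnorm : ‖r • (ω : E)‖ = r := by
    rw [norm_smul, norm_eq_of_mem_sphere, mul_one, Real.norm_of_nonneg hr.le]
  have hχ_norm : HasFDerivAt (fun x : E => χ ‖x‖) _ (r • (ω : E)) :=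
    HasDerivAt.comp_hasFDerivAt (r • (ω : E)) (by rw [hnorm]; exact hχ.hasDerivAt)
      (hasFDerivAt_norm_of_ne_zero hne)
  rw [(hχ_norm.fun_mul (hG _ hne).hasFDerivAt).fderiv]
  simp only [add_apply, smul_apply, smul_eq_mul, innerSL_apply_apply, real_inner_smul_left, hnorm,
    hhom hr, hhom.fderiv_apply w hr, zpow_sub_one₀ hr.ne']
  field_simp

lemma integral_Ioi_fderiv_comp_norm_mul [Nontrivial E] [FiniteDimensional ℝ E] {χ : ℝ → ℝ}
    {G : E → ℝ} (hχ : ContDiff ℝ 1 χ) (hχ_supp : HasCompactSupport χ) (hχ_zero : χ 0 = 0)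
    (hχ_int : IntegrableOn (fun r => r⁻¹ * χ r) (Ioi 0)) (hG : ∀ x ≠ 0, DifferentiableAt ℝ G x)
    (hhom : IsPosHomogeneous (1 - Module.finrank ℝ E) G) (ω : sphere (0 : E) 1) (w : E) :
    ∫ r in Ioi (0 : ℝ), r ^ (Module.finrank ℝ E - 1) •
        fderiv ℝ (fun x => χ ‖x‖ * G x) (r • (ω : E)) w =
      (∫ r in Ioi (0 : ℝ), r⁻¹ * χ r) * fderiv ℝ G ω w := by
  have hdegree : ((Module.finrank ℝ E - 1 : ℕ) : ℤ) + (1 - Module.finrank ℝ E) = 0 := by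
    have := Module.finrank_pos (R := ℝ) (M := E)
    omega
  have hχ'_int : IntegrableOn (deriv χ) (Ioi 0) :=
    ((hχ.continuous_deriv le_rfl).integrable_of_hasCompactSupport hχ_supp.deriv).integrableOn
  have hχ'_integral : ∫ r in Ioi (0 : ℝ), deriv χ r = 0 := by
    rw [hχ_supp.integral_Ioi_deriv_eq hχ, hχ_zero, neg_zero]
  calc
    _ = ∫ r in Ioi (0 : ℝ),
          (r⁻¹ * χ r * fderiv ℝ G ω w + deriv χ r * (⟪(ω : E), w⟫ * G ω)) := by
      refine setIntegral_congr_fun measurableSet_Ioi fun r hr => ?_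
      have hr_pos : 0 < r := hr
      simp only [smul_eq_mul]
      rw [fderiv_comp_norm_mul_smul_sphere (hχ.differentiable one_ne_zero r) hG hhom hr_pos,
        ← mul_assoc, ← zpow_natCast, ← zpow_add₀ hr_pos.ne', hdegree, zpow_zero, one_mul]
    _ = _ := by
      rw [integral_add (hχ_int.mul_const _) (hχ'_int.mul_const _), integral_mul_const,
        integral_mul_const, hχ'_integral, zero_mul, add_zero]

lemma exists_contDiff_radial_cutoff : ∃ χ : ℝ → ℝ, ContDiff ℝ 1 χ ∧ HasCompactSupport χ ∧
    χ =ᶠ[𝓝 0] 0 ∧ IntegrableOn (fun r => r⁻¹ * χ r) (Ioi 0) ∧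
    ∫ r in Ioi (0 : ℝ), r⁻¹ * χ r ≠ 0 := by
  let φ : ContDiffBump (2 : ℝ) := ⟨1 / 2, 1, by norm_num, by norm_num⟩
  have hφ_zero {r : ℝ} (hr : r < 1) : φ r = 0 := φ.zero_of_le_dist <| by
    rw [Real.dist_eq, abs_sub_comm]
    exact (le_abs_self _).trans' (by linarith)
  have hcancel : EqOn (fun r => r⁻¹ * (r * φ r)) φ (Ioi 0) := fun r hr =>
    inv_mul_cancel_left₀ (ne_of_gt hr) _
  refine ⟨fun r => r * φ r, contDiff_id.mul φ.contDiff, φ.hasCompactSupport.mul_left, ?_,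
    φ.integrable.integrableOn.congr_fun hcancel.symm measurableSet_Ioi, ?_⟩
  · filter_upwards [Iio_mem_nhds one_pos] with r hr
    rw [hφ_zero hr, mul_zero, Pi.zero_apply]
  · rw [setIntegral_congr_fun measurableSet_Ioi hcancel,
      setIntegral_eq_integral_of_forall_compl_eq_zero (s := Ioi (0 : ℝ)) fun r hr =>
        hφ_zero ((not_lt.1 hr).trans_lt one_pos)]
    exact φ.integral_pos.ne'

variable [FiniteDimensional ℝ E] [MeasurableSpace E] [BorelSpace E] (μ : Measure E)
  [μ.IsAddHaarMeasure]

theorem integral_sphere_fderiv_eq_zero {G : E → ℝ} (hG : ∀ x ≠ 0, ContDiffAt ℝ 1 G x)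
    (hhom : IsPosHomogeneous (1 - Module.finrank ℝ E) G) (w : E) :
    ∫ ω : sphere (0 : E) 1, fderiv ℝ G ω w ∂μ.toSphere = 0 := by
  rcases subsingleton_or_nontrivial E with hE | _
  · rw [μ.toSphere_eq_zero_iff.2 hE, integral_zero_measure]
  obtain ⟨χ, hχ, hχ_supp, hχ_zero, hχ_int, hχ_ne⟩ := exists_contDiff_radial_cutoff
  have hF := contDiff_comp_norm_mul hχ hχ_zero hG
  have hF_supp : HasCompactSupport fun x : E => χ ‖x‖ * G x :=
    (hasCompactSupport_comp_norm hχ_supp).mul_right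
  have hmean := integral_fderiv_eq_zero_of_hasCompactSupport μ hF hF_supp w
  rw [integral_eq_integral_sphere_integral_Ioi μ
    (integrable_fderiv_of_hasCompactSupport μ hF hF_supp w)] at hmean
  simp_rw [integral_Ioi_fderiv_comp_norm_mul hχ hχ_supp hχ_zero.eq_of_nhds hχ_int
    (fun x hx => (hG x hx).differentiableAt one_ne_zero) hhom, integral_const_mul] at hmean
  exact (mul_eq_zero.1 hmean).resolve_left hχ_ne

end SphericalMean

section LightCone

variable {E : Type*} [NormedAddCommGroup E] [InnerProductSpace ℝ E]

/-- The linear form `⟨a, ·⟩` of the Minkowski inner product `a₀ t - a' · x` on `ℝ × E`. -/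
def minkowskiForm (a : ℝ × E) : ℝ × E →L[ℝ] ℝ :=
  a.1 • ContinuousLinearMap.fst ℝ ℝ E - innerSL ℝ a.2 ∘L ContinuousLinearMap.snd ℝ ℝ E

/-- The quotient `⟨d, ·⟩ / ⟨a, ·⟩` of Minkowski forms, which is `α_i` for `a = (1, v)` and `d` the
`i`-th coordinate direction; its value is `0` on the hyperplane `⟨a, p⟩ = 0`. -/
def minkowskiQuotient (a d : ℝ × E) (p : ℝ × E) : ℝ :=
  minkowskiForm d p / minkowskiForm a p

/-- The restriction of a function on `ℝ × E` to the forward light cone, parametrized by `x ∈ E` and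
divided by `‖x‖`, the weight that appears in the Lorentz-invariant measure `dx / ‖x‖`. -/
def coneTrace (f : ℝ × E → ℝ) (x : E) : ℝ :=
  ‖x‖⁻¹ * f (‖x‖, x)

lemma minkowskiForm_apply (a p : ℝ × E) : minkowskiForm a p = a.1 * p.1 - ⟪a.2, p.2⟫ := rfl

lemma minkowskiForm_cone_pos {a : ℝ × E} (ha : ‖a.2‖ < a.1) {x : E} (hx : x ≠ 0) :
    0 < minkowskiForm a (‖x‖, x) :=
  sub_pos.2 <| (real_inner_le_norm _ _).trans_lt <|
    mul_lt_mul_of_pos_right ha (norm_pos_iff.2 hx)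

lemma contDiffAt_minkowskiQuotient {n : WithTop ℕ∞} {a p : ℝ × E} (d : ℝ × E)
    (hp : minkowskiForm a p ≠ 0) : ContDiffAt ℝ n (minkowskiQuotient a d) p :=
  (minkowskiForm d).contDiff.contDiffAt.div (minkowskiForm a).contDiff.contDiffAt hp

lemma isPosHomogeneous_minkowskiQuotient (a d : ℝ × E) :
    IsPosHomogeneous 0 (minkowskiQuotient a d) := fun r hr p => by
  simp only [minkowskiQuotient, map_smul, smul_eq_mul, mul_div_mul_left _ _ hr.ne', zpow_zero,
    one_mul]

lemma isPosHomogeneous_coneTrace {k : ℤ} {f : ℝ × E → ℝ} (hf : IsPosHomogeneous k f) :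
    IsPosHomogeneous (k - 1) (coneTrace f) := fun r hr x => by
  have hcone : (‖r • x‖, r • x) = r • (‖x‖, x) := by
    rw [norm_smul, Real.norm_of_nonneg hr.le, Prod.smul_mk, smul_eq_mul]
  rw [coneTrace, hcone, hf hr, norm_smul, Real.norm_of_nonneg hr.le, zpow_sub_one₀ hr.ne',
    mul_inv, coneTrace]
  ring

lemma contDiffAt_coneTrace {n : WithTop ℕ∞} {f : ℝ × E → ℝ} {x : E} (hx : x ≠ 0)
    (hf : ContDiffAt ℝ n f (‖x‖, x)) : ContDiffAt ℝ n (coneTrace f) x :=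
  ((contDiffAt_norm ℝ hx).inv (norm_ne_zero_iff.2 hx)).mul
    (ContDiffAt.comp (f := fun y : E => (‖y‖, y)) x hf
      ((contDiffAt_norm ℝ hx).prodMk contDiffAt_id))

-- The terms other than `∂_a f` depend on `f` and `a` only through the product `⟨a, ·⟩ f`.
lemma fderiv_coneTrace_apply {f : ℝ × E → ℝ} {x : E} (hx : x ≠ 0)
    (hf : DifferentiableAt ℝ f (‖x‖, x)) (a : ℝ × E) :
    fderiv ℝ (coneTrace f) x a.2 = ‖x‖⁻¹ * fderiv ℝ f (‖x‖, x) a -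
      ‖x‖⁻¹ ^ 2 * (fderiv ℝ (fun p => minkowskiForm a p * f p) (‖x‖, x) (1, 0) -
        ‖x‖⁻¹ * (minkowskiForm a (‖x‖, x) * f (‖x‖, x))) := by
  have hx_norm : ‖x‖ ≠ 0 := norm_ne_zero_iff.2 hx
  have hnorm := hasFDerivAt_norm_of_ne_zero hx
  have hcone : HasFDerivAt (fun y => f (‖y‖, y)) _ x :=
    HasFDerivAt.comp x hf.hasFDerivAt (hnorm.prodMk (hasFDerivAt_id x))
  have htrace : HasFDerivAt (coneTrace f) _ x :=
    ((hasDerivAt_inv hx_norm).comp_hasFDerivAt x hnorm).mul hcone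
  have hsplit (s : ℝ) (y : E) : fderiv ℝ f (‖x‖, x) (s, y) =
      s * fderiv ℝ f (‖x‖, x) (1, 0) + fderiv ℝ f (‖x‖, x) (0, y) := by
    rw [← smul_eq_mul, ← map_smul, ← map_add]
    simp
  rw [htrace.fderiv, ((minkowskiForm a).hasFDerivAt.fun_mul hf.hasFDerivAt).fderiv]
  simp only [add_apply, smul_apply, ContinuousLinearMap.comp_apply, ContinuousLinearMap.prod_apply,
    ContinuousLinearMap.id_apply, innerSL_apply_apply, smul_eq_mul, minkowskiForm_apply,
    inner_zero_right, Function.comp_apply]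
  rw [hsplit _ a.2, ← Prod.mk.eta (p := a), hsplit a.1 a.2, real_inner_comm]
  field_simp
  ring

lemma fderiv_coneTrace_sub_fderiv_coneTrace {f h : ℝ × E → ℝ} {a d : ℝ × E} {x : E} (hx : x ≠ 0)
    (hf : DifferentiableAt ℝ f (‖x‖, x)) (hh : DifferentiableAt ℝ h (‖x‖, x))
    (htangent : ∀ᶠ p in 𝓝 (‖x‖, x), minkowskiForm a p * f p = minkowskiForm d p * h p) :
    fderiv ℝ (coneTrace f) x a.2 - fderiv ℝ (coneTrace h) x d.2 =
      ‖x‖⁻¹ * (fderiv ℝ f (‖x‖, x) a - fderiv ℝ h (‖x‖, x) d) := by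
  rw [fderiv_coneTrace_apply hx hf, fderiv_coneTrace_apply hx hh,
    EventuallyEq.fderiv_eq htangent, htangent.self_of_nhds]
  ring

variable [FiniteDimensional ℝ E] [MeasurableSpace E] [BorelSpace E] (μ : Measure E)
  [μ.IsAddHaarMeasure]

theorem integral_sphere_fderiv_sub_fderiv_eq_zero {f h : ℝ × E → ℝ} {a d : ℝ × E}
    (hf : ∀ x ≠ 0, ContDiffAt ℝ 1 f (‖x‖, x)) (hh : ∀ x ≠ 0, ContDiffAt ℝ 1 h (‖x‖, x))
    (hf_hom : IsPosHomogeneous (2 - Module.finrank ℝ E) f)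
    (hh_hom : IsPosHomogeneous (2 - Module.finrank ℝ E) h)
    (htangent : ∀ x ≠ 0,
      ∀ᶠ p in 𝓝 (‖x‖, x), minkowskiForm a p * f p = minkowskiForm d p * h p) :
    ∫ ω : sphere (0 : E) 1, (fderiv ℝ f (1, (ω : E)) a - fderiv ℝ h (1, (ω : E)) d)
      ∂μ.toSphere = 0 := by
  have hdegree : (2 - Module.finrank ℝ E - 1 : ℤ) = 1 - Module.finrank ℝ E := by ring
  have hf_trace (x : E) (hx : x ≠ 0) := contDiffAt_coneTrace hx (hf x hx)
  have hh_trace (x : E) (hx : x ≠ 0) := contDiffAt_coneTrace hx (hh x hx)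
  have hpoint (ω : sphere (0 : E) 1) :
      fderiv ℝ f (1, (ω : E)) a - fderiv ℝ h (1, (ω : E)) d =
        fderiv ℝ (coneTrace f) ω a.2 - fderiv ℝ (coneTrace h) ω d.2 := by
    have hω := ne_zero_of_mem_unit_sphere ω
    simpa using (fderiv_coneTrace_sub_fderiv_coneTrace hω
      ((hf ω hω).differentiableAt one_ne_zero) ((hh ω hω).differentiableAt one_ne_zero)
      (htangent ω hω)).symm
  simp_rw [hpoint]
  rw [integral_sub (integrable_sphere_fderiv μ hf_trace a.2)
      (integrable_sphere_fderiv μ hh_trace d.2),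
    integral_sphere_fderiv_eq_zero μ hf_trace (hdegree ▸ isPosHomogeneous_coneTrace hf_hom),
    integral_sphere_fderiv_eq_zero μ hh_trace (hdegree ▸ isPosHomogeneous_coneTrace hh_hom),
    sub_zero]

theorem b2_spherical_mean_zero_general {a : ℝ × E} (ha : ‖a.2‖ < a.1) (d : ℝ × E)
    {h : ℝ × E → ℝ} (hh : ∀ x ≠ 0, ContDiffAt ℝ 1 h (‖x‖, x))
    (hhom : IsPosHomogeneous (2 - Module.finrank ℝ E) h) :
    ∫ ω : sphere (0 : E) 1, (-fderiv ℝ h (1, (ω : E)) d +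
      fderiv ℝ (fun p => minkowskiQuotient a d p * h p) (1, (ω : E)) a) ∂μ.toSphere = 0 := by
  have hne (x : E) (hx : x ≠ 0) := (minkowskiForm_cone_pos ha hx).ne'
  have hprod_hom := (isPosHomogeneous_minkowskiQuotient a d).mul hhom
  rw [zero_add] at hprod_hom
  simp_rw [neg_add_eq_sub]
  refine integral_sphere_fderiv_sub_fderiv_eq_zero μ
    (fun x hx => (contDiffAt_minkowskiQuotient d (hne x hx)).mul (hh x hx)) hh hprod_hom hhom
    fun x hx => ?_
  filter_upwards [(minkowskiForm a).continuous.continuousAt.eventually_ne (hne x hx)] with p hp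
  rw [← mul_assoc, minkowskiQuotient, mul_div_cancel₀ _ hp]

end LightCone

lemma alphaF_eq_minkowskiQuotient (v : E3) (i : Fin 4) :
    alphaF v i = minkowskiQuotient (1, v) (dir4 i) := by
  funext p
  refine Fin.cases ?_ (fun k => ?_) i
  · simp [alphaF, dir4, minkowskiQuotient, minkowskiForm_apply, real_inner_comm]
  · simp only [alphaF, dir4, Fin.cons_succ, minkowskiQuotient, minkowskiForm_apply, e3,
      EuclideanSpace.inner_single_left, map_one, one_mul, zero_mul, zero_sub]
    rw [← neg_sub p.1, div_neg, neg_div, real_inner_comm]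

lemma contDiffAt_TalphaF {v : E3} (hv : ‖v‖ < 1) (i : Fin 4) {x : E3} (hx : x ≠ 0) :
    ContDiffAt ℝ 1 (TalphaF v i) (‖x‖, x) := by
  have halpha : ContDiffAt ℝ 2 (alphaF v i) (‖x‖, x) := by
    rw [alphaF_eq_minkowskiQuotient]
    exact contDiffAt_minkowskiQuotient _ (minkowskiForm_cone_pos hv hx).ne'
  exact (halpha.fderiv_right (by norm_num)).clm_apply contDiffAt_const

lemma isPosHomogeneous_TalphaF (v : E3) (i : Fin 4) : IsPosHomogeneous (-1) (TalphaF v i) := by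
  have halpha : IsPosHomogeneous 0 (alphaF v i) := by
    rw [alphaF_eq_minkowskiQuotient]
    exact isPosHomogeneous_minkowskiQuotient _ _
  exact halpha.fderiv_apply (1, v)

/-- **Vanishing spherical mean of the degree `-2` coefficients in the division lemma**:
for `|v| < 1` and `i,j ∈ {0,1,2,3}`, `∫_{S²} b²_{ij}(1,ω) dσ(ω) = 0`. -/
theorem b2_spherical_mean_zero (v : E3) (hv : ‖v‖ < 1) (i j : Fin 4) :
    ∫ ω : Metric.sphere (0 : E3) 1, b2F v i j ((1 : ℝ), (ω : E3)) ∂sphMeasure = 0 := by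
  simp_rw [b2F, alphaF_eq_minkowskiQuotient v i]
  exact b2_spherical_mean_zero_general volume (a := (1, v)) hv (dir4 i)
    (fun _ hx => contDiffAt_TalphaF hv j hx) (by simpa using isPosHomogeneous_TalphaF v j)
end
end

section
/- Logarithmic estimate for mean-zero spherical kernels: let b : S² → ℝ be continuous with ∫_{S²} b(ω) dσ(ω) = 0, let t > 0, M ≥ 0, L > 0, and let f : [0,t] × ℝ³ → ℝ be measurable with |f(s,y)| ≤ M for all (s,y) and |f(s,y) − f(s,y′)| ≤ L|y − y′| for all s ∈ [0,t] and y, y′ ∈ ℝ³. Then for every x ∈ ℝ³, | ∫_0^t (1/(4πs)) ∫_{S²} b(ω) f(t−s, x−sω) dσ(ω) ds | ≤ ‖b‖_{L^∞(S²)} ( M ln₊(tL) + 1 ), where ln₊ z = max(ln z, 0). -/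
open MeasureTheory Real Set Filter Metric RealInnerProductSpace
open scoped ENNReal NNReal Topology

noncomputable section

/-- `ln₊ z = max (ln z) 0`. -/
def lnpos (z : ℝ) : ℝ := max (Real.log z) 0

/-!
Since `b` has mean zero, only the oscillation of `f (t - s)` on the sphere of radius `s` about `x`
contributes to the spherical mean at time `s`; this is `O(L s)` and cancels the singularity `1 / s`
near `s = 0`. Away from `0` one bounds `f` by `M`, and `1 / s` integrates to a logarithm. The two
bounds are balanced by splitting `(0, t]` at `min t L⁻¹`.
-/

section WeightedAverage

variable {Ω F : Type*} [MeasurableSpace Ω] [NormedAddCommGroup F] [NormedSpace ℝ F]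
  {σ : Measure Ω} {b : Ω → ℝ} {g : Ω → F} {B D : ℝ}

theorem norm_average_le_of_norm_le_const (hD : 0 ≤ D) (hg : ∀ᵐ ω ∂σ, ‖g ω‖ ≤ D) :
    ‖⨍ ω, g ω ∂σ‖ ≤ D := by
  have hmass : ((σ univ)⁻¹ • σ).real univ ≤ 1 :=
    ENNReal.toReal_le_of_le_ofReal zero_le_one <| by simp
  calc ‖⨍ ω, g ω ∂σ‖ ≤ D * ((σ univ)⁻¹ • σ).real univ :=
        norm_integral_le_of_norm_le_const (Measure.ae_smul_measure hg _)
    _ ≤ D := mul_le_of_le_one_right hD hmass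

theorem norm_average_smul_le (hB : 0 ≤ B) (hD : 0 ≤ D) (hbB : ∀ᵐ ω ∂σ, |b ω| ≤ B)
    (hgD : ∀ᵐ ω ∂σ, ‖g ω‖ ≤ D) : ‖⨍ ω, b ω • g ω ∂σ‖ ≤ B * D := by
  refine norm_average_le_of_norm_le_const (mul_nonneg hB hD) ?_
  filter_upwards [hbB, hgD] with ω hbω hgω
  rw [norm_smul]
  exact mul_le_mul hbω hgω (norm_nonneg _) hB

theorem average_smul_sub_const_of_integral_eq_zero [CompleteSpace F]
    (hbg : Integrable (fun ω => b ω • g ω) σ) (hb : Integrable b σ) (hbmean : ∫ ω, b ω ∂σ = 0)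
    (c : F) : ⨍ ω, b ω • (g ω - c) ∂σ = ⨍ ω, b ω • g ω ∂σ := by
  simp only [average_eq, smul_sub]
  rw [integral_sub hbg (hb.smul_const c), integral_smul_const, hbmean, zero_smul, sub_zero]

theorem norm_average_smul_le_of_integral_eq_zero [CompleteSpace F] [IsFiniteMeasure σ]
    (hB : 0 ≤ B) (hD : 0 ≤ D) (hb : AEStronglyMeasurable b σ) (hbB : ∀ᵐ ω ∂σ, |b ω| ≤ B)
    (hbmean : ∫ ω, b ω ∂σ = 0) (hg : AEStronglyMeasurable g σ) {c : F}
    (hgD : ∀ᵐ ω ∂σ, ‖g ω - c‖ ≤ D) : ‖⨍ ω, b ω • g ω ∂σ‖ ≤ B * D := by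
  have hb_int : Integrable b σ := .of_bound hb B hbB
  have hg_int : Integrable g σ := by
    simpa using (Integrable.of_bound (hg.sub aestronglyMeasurable_const) D hgD).add
      (integrable_const c)
  rw [← average_smul_sub_const_of_integral_eq_zero (hg_int.bdd_smul B hb hbB) hb_int hbmean c]
  exact norm_average_smul_le hB hD hbB hgD

end WeightedAverage

section RetardedMean

variable {Ω E F : Type*} [MeasurableSpace Ω] [NormedAddCommGroup E] [NormedSpace ℝ E]
  [NormedAddCommGroup F] [NormedSpace ℝ F]

/-- The mean of `f (t - s)` over the points `x - s • v ω`, weighted by `b`. For `v` the inclusion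
of the unit sphere of `ℝ³` this is the weighted spherical mean on the backward light cone of
`(t, x)`; the normalization by `σ univ` supplies the factor `1 / (4π)` there. -/
def retardedMean (σ : Measure Ω) (b : Ω → ℝ) (v : Ω → E) (f : ℝ → E → F) (t : ℝ) (x : E) (s : ℝ) :
    F :=
  ⨍ ω, b ω • f (t - s) (x - s • v ω) ∂σ

variable {σ : Measure Ω} {b : Ω → ℝ} {v : Ω → E} {f : ℝ → E → F} {B M L t s : ℝ} {x : E}

theorem norm_retardedMean_le (hB : 0 ≤ B) (hbB : ∀ᵐ ω ∂σ, |b ω| ≤ B)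
    (hbd : ∀ y, ‖f (t - s) y‖ ≤ M) : ‖retardedMean σ b v f t x s‖ ≤ B * M :=
  norm_average_smul_le hB ((norm_nonneg _).trans (hbd x)) hbB (ae_of_all _ fun _ => hbd _)

theorem norm_retardedMean_le_of_integral_eq_zero [CompleteSpace F] [IsFiniteMeasure σ]
    (hB : 0 ≤ B) (hL : 0 ≤ L) (hs : 0 ≤ s) (hb : AEStronglyMeasurable b σ)
    (hbB : ∀ᵐ ω ∂σ, |b ω| ≤ B) (hbmean : ∫ ω, b ω ∂σ = 0)
    (hv : AEStronglyMeasurable v σ) (hv_le : ∀ᵐ ω ∂σ, ‖v ω‖ ≤ 1)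
    (hlip : ∀ y y', ‖f (t - s) y - f (t - s) y'‖ ≤ L * ‖y - y'‖) :
    ‖retardedMean σ b v f t x s‖ ≤ B * (L * s) := by
  have hosc : ∀ᵐ ω ∂σ, ‖f (t - s) (x - s • v ω) - f (t - s) x‖ ≤ L * s := by
    filter_upwards [hv_le] with ω hω
    calc ‖f (t - s) (x - s • v ω) - f (t - s) x‖ ≤ L * ‖x - s • v ω - x‖ := hlip _ _
      _ = L * (s * ‖v ω‖) := by
        rw [sub_sub_cancel_left, norm_neg, norm_smul, Real.norm_of_nonneg hs]
      _ ≤ L * s := by gcongr; exact mul_le_of_le_one_right hs hω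
  have hcont : Continuous (f (t - s)) :=
    (LipschitzWith.of_dist_le' fun y y' => by simpa only [dist_eq_norm] using hlip y y').continuous
  have hpath : AEStronglyMeasurable (fun ω => x - s • v ω) σ :=
    aestronglyMeasurable_const.sub (hv.const_smul s)
  exact norm_average_smul_le_of_integral_eq_zero hB (mul_nonneg hL hs) hb hbB hbmean
    (hcont.comp_aestronglyMeasurable hpath) hosc

theorem aestronglyMeasurable_retardedMean [MeasurableSpace E] [BorelSpace E]
    [SecondCountableTopology E] [SFinite σ]
    (hb : AEStronglyMeasurable b σ) (hv : Measurable v)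
    (hf : StronglyMeasurable fun q : ℝ × E => f q.1 q.2) (μ : Measure ℝ) [SFinite μ] :
    AEStronglyMeasurable (retardedMean σ b v f t x) μ := by
  have hpath : Measurable fun p : ℝ × Ω => (t - p.1, x - p.1 • v p.2) := by fun_prop
  have hjoint : AEStronglyMeasurable
      (fun p : ℝ × Ω => b p.2 • f (t - p.1) (x - p.1 • v p.2)) (μ.prod σ) :=
    hb.comp_snd.smul (hf.comp_measurable hpath).aestronglyMeasurable
  exact (hjoint.integral_prod_right'.const_smul (σ.real univ)⁻¹).congr
    (ae_of_all _ fun _ => (average_eq _ _).symm)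

end RetardedMean

section LogarithmicBound

variable {F : Type*} [NormedAddCommGroup F] [NormedSpace ℝ F] {φ : ℝ → F} {t L : ℝ}

theorem norm_setIntegral_Ioc_le_add_log {A C θ : ℝ} (hθ : 0 < θ) (hθt : θ ≤ t)
    (hφ : IntegrableOn φ (Ioc 0 t)) (hA : ∀ s ∈ Ioc 0 θ, ‖φ s‖ ≤ A)
    (hC : ∀ s ∈ Ioc θ t, ‖φ s‖ ≤ C * s⁻¹) :
    ‖∫ s in Ioc 0 t, φ s‖ ≤ A * θ + C * log (t / θ) := by
  have ht : 0 < t := hθ.trans_le hθt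
  have hnear : ‖∫ s in (0)..θ, φ s‖ ≤ A * θ := by
    simpa [abs_of_pos hθ] using intervalIntegral.norm_integral_le_of_norm_le_const
      (a := 0) (b := θ) (f := φ) (by rwa [uIoc_of_le hθ.le])
  have hinv : IntervalIntegrable (fun s => C * s⁻¹) volume θ t :=
    (intervalIntegrable_inv_iff.2 (.inr (notMem_uIcc_of_lt hθ ht))).const_mul C
  have hfar : ‖∫ s in θ..t, φ s‖ ≤ C * log (t / θ) := by
    rw [← integral_inv_of_pos hθ ht, ← intervalIntegral.integral_const_mul]
    exact intervalIntegral.norm_integral_le_of_norm_le hθt (ae_of_all _ hC) hinv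
  have hφ_near : IntervalIntegrable φ volume 0 θ :=
    (intervalIntegrable_iff_integrableOn_Ioc_of_le hθ.le).2 (hφ.mono_set (Ioc_subset_Ioc_right hθt))
  have hφ_far : IntervalIntegrable φ volume θ t :=
    (intervalIntegrable_iff_integrableOn_Ioc_of_le hθt).2 (hφ.mono_set (Ioc_subset_Ioc_left hθ.le))
  rw [← intervalIntegral.integral_of_le ht.le,
    ← intervalIntegral.integral_add_adjacent_intervals hφ_near hφ_far]
  exact norm_add_le_of_le hnear hfar

theorem log_div_min_inv (ht : 0 < t) (hL : 0 < L) : log (t / min t L⁻¹) = lnpos (t * L) := by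
  rcases le_total t L⁻¹ with h | h
  · have htL : t * L ≤ 1 := (le_inv_mul_iff₀' hL).1 (by simpa using h)
    rw [min_eq_left h, div_self ht.ne', log_one, lnpos,
      max_eq_right (log_nonpos (by positivity) htL)]
  · have htL : 1 ≤ t * L := (inv_le_iff_one_le_mul₀ hL).1 h
    rw [min_eq_right h, div_inv_eq_mul, lnpos, max_eq_left (log_nonneg htL)]

theorem norm_setIntegral_Ioc_le_mul_lnpos {K M : ℝ} (hK : 0 ≤ K) (ht : 0 < t) (hL : 0 < L)
    (hφ : IntegrableOn φ (Ioc 0 t)) (hKL : ∀ s ∈ Ioc 0 t, ‖φ s‖ ≤ K * L)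
    (hKM : ∀ s ∈ Ioc 0 t, ‖φ s‖ ≤ K * M * s⁻¹) :
    ‖∫ s in Ioc 0 t, φ s‖ ≤ K * (M * lnpos (t * L) + 1) := by
  have hθ : 0 < min t L⁻¹ := lt_min ht (inv_pos.2 hL)
  have hLθ : L * min t L⁻¹ ≤ 1 := (le_inv_mul_iff₀ hL).1 (by simp)
  calc ‖∫ s in Ioc 0 t, φ s‖
      ≤ K * L * min t L⁻¹ + K * M * log (t / min t L⁻¹) :=
        norm_setIntegral_Ioc_le_add_log hθ (min_le_left _ _) hφ
          (fun s hs => hKL s ⟨hs.1, hs.2.trans (min_le_left _ _)⟩)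
          (fun s hs => hKM s ⟨hθ.trans hs.1, hs.2⟩)
    _ = K * (M * lnpos (t * L) + L * min t L⁻¹) := by rw [log_div_min_inv ht hL]; ring
    _ ≤ K * (M * lnpos (t * L) + 1) := by gcongr

end LogarithmicBound

theorem log_estimate_mean_zero_kernel_general {Ω E F : Type*} [MeasurableSpace Ω]
    [NormedAddCommGroup E] [NormedSpace ℝ E] [MeasurableSpace E] [BorelSpace E]
    [SecondCountableTopology E] [NormedAddCommGroup F] [NormedSpace ℝ F] [CompleteSpace F]
    {σ : Measure Ω} [IsFiniteMeasure σ] {b : Ω → ℝ} {v : Ω → E} {f : ℝ → E → F} {B M L t : ℝ}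
    (hB : 0 ≤ B) (hb : AEStronglyMeasurable b σ) (hbB : ∀ᵐ ω ∂σ, |b ω| ≤ B)
    (hbmean : ∫ ω, b ω ∂σ = 0) (hv : Measurable v) (hv_le : ∀ᵐ ω ∂σ, ‖v ω‖ ≤ 1)
    (ht : 0 < t) (hL : 0 < L) (hf : StronglyMeasurable fun q : ℝ × E => f q.1 q.2)
    (hbd : ∀ s ∈ Icc 0 t, ∀ y, ‖f s y‖ ≤ M)
    (hlip : ∀ s ∈ Icc 0 t, ∀ y y', ‖f s y - f s y'‖ ≤ L * ‖y - y'‖) (x : E) :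
    ‖∫ s in Ioc 0 t, s⁻¹ • retardedMean σ b v f t x s‖ ≤ B * (M * lnpos (t * L) + 1) := by
  have hmem : ∀ s ∈ Ioc 0 t, t - s ∈ Icc 0 t := fun s hs =>
    ⟨sub_nonneg.2 hs.2, sub_le_self t hs.1.le⟩
  have hnorm {s : ℝ} (hs : s ∈ Ioc 0 t) :
      ‖s⁻¹ • retardedMean σ b v f t x s‖ = s⁻¹ * ‖retardedMean σ b v f t x s‖ := by
    rw [norm_smul, Real.norm_of_nonneg (inv_nonneg.2 hs.1.le)]
  have hlip_bound : ∀ s ∈ Ioc 0 t, ‖s⁻¹ • retardedMean σ b v f t x s‖ ≤ B * L := fun s hs => by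
    rw [hnorm hs, inv_mul_le_iff₀ hs.1, mul_comm s, mul_assoc]
    exact norm_retardedMean_le_of_integral_eq_zero hB hL.le hs.1.le hb hbB hbmean
      hv.aestronglyMeasurable hv_le (hlip _ (hmem s hs))
  have hsup_bound : ∀ s ∈ Ioc 0 t, ‖s⁻¹ • retardedMean σ b v f t x s‖ ≤ B * M * s⁻¹ :=
    fun s hs => by
      rw [hnorm hs, mul_comm s⁻¹]
      exact mul_le_mul_of_nonneg_right (norm_retardedMean_le hB hbB (hbd _ (hmem s hs)))
        (inv_nonneg.2 hs.1.le)
  have hint : IntegrableOn (fun s => s⁻¹ • retardedMean σ b v f t x s) (Ioc 0 t) :=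
    .of_bound measure_Ioc_lt_top (measurable_inv.aestronglyMeasurable.smul
      (aestronglyMeasurable_retardedMean hb hv hf _)) (B * L)
      ((ae_restrict_iff' measurableSet_Ioc).2 (ae_of_all _ hlip_bound))
  exact norm_setIntegral_Ioc_le_mul_lnpos hB ht hL hint hlip_bound hsup_bound

section Sphere

instance : IsFiniteMeasure sphMeasure :=
  inferInstanceAs (IsFiniteMeasure (volume : Measure E3).toSphere)

theorem sphMeasure_real_univ : sphMeasure.real univ = 4 * π := by
  rw [sphMeasure, Measure.toSphere_real_apply_univ, finrank_euclideanSpace_fin, Measure.real,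
    EuclideanSpace.volume_ball_fin_three, ENNReal.ofReal_one, one_pow, one_mul,
    ENNReal.toReal_ofReal (by positivity)]
  ring

theorem inv_smul_retardedMean_sphMeasure (b : sphere (0 : E3) 1 → ℝ) (f : ℝ → E3 → ℝ) (t : ℝ)
    (x : E3) (s : ℝ) :
    s⁻¹ • retardedMean sphMeasure b (↑) f t x s =
      (4 * π * s)⁻¹ * ∫ ω, b ω * f (t - s) (x - s • (ω : E3)) ∂sphMeasure := by
  simp only [retardedMean, average_eq, sphMeasure_real_univ, smul_eq_mul, mul_inv_rev, mul_assoc]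

end Sphere

/-- **Logarithmic estimate for mean-zero spherical kernels**: if `b` is continuous on
`S²` with zero mean, `|f| ≤ M` and `f(s,·)` is `L`-Lipschitz, then for every `x`,
`|∫_0^t (1/(4πs)) ∫_{S²} b(ω) f(t-s, x-sω) dσ(ω) ds| ≤ ‖b‖_{L^∞(S²)} (M ln₊(tL) + 1)`. -/
theorem log_estimate_mean_zero_kernel
    (b : Metric.sphere (0 : E3) 1 → ℝ) (hb : Continuous b)
    (hbmean : ∫ ω, b ω ∂sphMeasure = 0)
    (t M L : ℝ) (ht : 0 < t) (hM : 0 ≤ M) (hL : 0 < L)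
    (f : ℝ → E3 → ℝ) (hmeas : Measurable fun q : ℝ × E3 => f q.1 q.2)
    (hbd : ∀ s ∈ Set.Icc 0 t, ∀ y : E3, |f s y| ≤ M)
    (hlip : ∀ s ∈ Set.Icc 0 t, ∀ y y' : E3, |f s y - f s y'| ≤ L * ‖y - y'‖) :
    ∀ x : E3,
      |∫ s in Set.Ioc 0 t,
          (4 * π * s)⁻¹ * ∫ ω, b ω * f (t - s) (x - s • (ω : E3)) ∂sphMeasure|
        ≤ (⨆ ω : Metric.sphere (0 : E3) 1, |b ω|) * (M * lnpos (t * L) + 1) := by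
  simp only [← inv_smul_retardedMean_sphMeasure]
  exact log_estimate_mean_zero_kernel_general (Real.iSup_nonneg fun _ => abs_nonneg _)
    hb.aestronglyMeasurable (ae_of_all _ (le_ciSup (isCompact_range hb.abs).bddAbove)) hbmean
    measurable_subtype_coe (ae_of_all _ fun ω => (norm_eq_of_mem_sphere ω).le) ht hL
    hmeas.stronglyMeasurable hbd hlip
end
end

section
/- Logarithmic Gronwall lemma: let τ > 0, A ≥ 0, C ≥ 0 and let N : [0,τ) → [0,∞) be continuous and satisfy N(t) ≤ A + C∫_0^t (1 + ln₊ N(s)) N(s) ds for every t ∈ [0,τ) (the integral being finite). Then N(t) ≤ exp( (1 + ln(1+A)) e^{Ct} ) for every t ∈ [0,τ); in particular N is bounded on [0,τ). -/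
open MeasureTheory Real Set Filter
open scoped Topology

noncomputable section

/-!
Writing `ω(z) = (1 + ln₊ z) z`, the hypothesis is a Bihari–LaSalle inequality `N ≤ A + C ∫ ω(N)`.
If `Ω' = 1 / ω`, any `w` with `w' ≤ C ω(w)` satisfies `(Ω ∘ w)' ≤ C`, so `Ω ∘ w` grows at most
linearly. Integrating twice reduces to this case: `v = 1 + A + C ∫ ω(N)⁺` is continuous and
dominates `N`, so `v ≤ w := 1 + A + C ∫ ω(v)`, where `w` is differentiable and
`w' = C ω(v) ≤ C ω(w)`. On `[1, ∞)` one may take `Ω(z) = ln (1 + ln z)`, which explains both the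
shift from `A` to `1 + A` and the double exponential.
-/

section Primitive

variable {E : Type*} [NormedAddCommGroup E] [NormedSpace ℝ E] {f : ℝ → E} {t₀ T : ℝ}

lemma continuousOn_integral_of_intervalIntegrable (hT : t₀ ≤ T)
    (hf : IntervalIntegrable f volume t₀ T) :
    ContinuousOn (fun t => ∫ s in t₀..t, f s) (Icc t₀ T) := by
  simpa only [uIcc_of_le hT] using
    intervalIntegral.continuousOn_primitive_interval' hf left_mem_uIcc

lemma hasDerivAt_integral_of_continuousOn_Icc [CompleteSpace E] (hf : ContinuousOn f (Icc t₀ T))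
    {t : ℝ} (ht : t ∈ Ioo t₀ T) : HasDerivAt (fun r => ∫ s in t₀..r, f s) (f t) t :=
  intervalIntegral.integral_hasDerivAt_right
    ((hf.mono (Icc_subset_Icc_right ht.2.le)).intervalIntegrable_of_Icc ht.1.le)
    ((hf.mono Ioo_subset_Icc_self).stronglyMeasurableAtFilter isOpen_Ioo t ht)
    (hf.continuousAt (Icc_mem_nhds ht.1 ht.2))

end Primitive

section Bihari

variable {ω Ω : ℝ → ℝ} {a C t₀ T : ℝ}

lemma monotoneOn_of_hasDerivAt_inv (hω_pos : ∀ x ∈ Ici a, 0 < ω x)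
    (hΩ : ∀ x ∈ Ici a, HasDerivAt Ω (ω x)⁻¹ x) : MonotoneOn Ω (Ici a) :=
  monotoneOn_of_hasDerivWithinAt_nonneg (convex_Ici a) (HasDerivAt.continuousOn hΩ)
    (fun x hx => (hΩ x (interior_subset hx)).hasDerivWithinAt)
    fun x hx => (inv_pos.2 (hω_pos x (interior_subset hx))).le

lemma bihari_of_hasDerivAt_le {w w' : ℝ → ℝ} {S : Set ℝ} (hT : t₀ ≤ T)
    (hω_pos : ∀ x ∈ S, 0 < ω x) (hΩ : ∀ x ∈ S, HasDerivAt Ω (ω x)⁻¹ x)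
    (hw : ContinuousOn w (Icc t₀ T)) (hwS : MapsTo w (Icc t₀ T) S)
    (hw' : ∀ t ∈ Ioo t₀ T, HasDerivAt w (w' t) t)
    (hw'_le : ∀ t ∈ Ioo t₀ T, w' t ≤ C * ω (w t)) :
    Ω (w T) ≤ Ω (w t₀) + C * (T - t₀) := by
  rw [← interior_Icc] at hw' hw'_le
  have hwS' : ∀ t ∈ interior (Icc t₀ T), w t ∈ S := fun t ht => hwS (interior_subset ht)
  have hderiv : ∀ t ∈ interior (Icc t₀ T),
      HasDerivAt (fun t => Ω (w t) - C * t) ((ω (w t))⁻¹ * w' t - C * 1) t := fun t ht =>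
    ((hΩ (w t) (hwS' t ht)).comp t (hw' t ht)).sub ((hasDerivAt_id t).const_mul C)
  have hderiv_le : ∀ t ∈ interior (Icc t₀ T), (ω (w t))⁻¹ * w' t - C * 1 ≤ 0 := fun t ht => by
    rw [mul_one, sub_nonpos, inv_mul_le_iff₀' (hω_pos _ (hwS' t ht))]
    exact hw'_le t ht
  have hanti : AntitoneOn (fun t => Ω (w t) - C * t) (Icc t₀ T) :=
    antitoneOn_of_hasDerivWithinAt_nonpos (convex_Icc t₀ T)
      (((HasDerivAt.continuousOn hΩ).comp hw hwS).sub (by fun_prop))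
      (fun t ht => (hderiv t ht).hasDerivWithinAt) hderiv_le
  linarith [hanti (left_mem_Icc.2 hT) (right_mem_Icc.2 hT) hT]

lemma bihari_of_continuousOn {v : ℝ → ℝ} (hT : t₀ ≤ T) (hC : 0 ≤ C)
    (hω_cont : ContinuousOn ω (Ici a)) (hω_mono : MonotoneOn ω (Ici a))
    (hω_pos : ∀ x ∈ Ici a, 0 < ω x) (hΩ : ∀ x ∈ Ici a, HasDerivAt Ω (ω x)⁻¹ x)
    (hv : ContinuousOn v (Icc t₀ T)) (hav : ∀ t ∈ Icc t₀ T, a ≤ v t)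
    (hv_le : ∀ t ∈ Icc t₀ T, v t ≤ a + C * ∫ s in t₀..t, ω (v s)) :
    Ω (v T) ≤ Ω a + C * (T - t₀) := by
  have hωv : ContinuousOn (fun s => ω (v s)) (Icc t₀ T) := hω_cont.comp hv hav
  set w : ℝ → ℝ := fun t => a + C * ∫ s in t₀..t, ω (v s) with hw
  have haw : MapsTo w (Icc t₀ T) (Ici a) := fun t ht => (hav t ht).trans (hv_le t ht)
  have hw_cont : ContinuousOn w (Icc t₀ T) :=
    continuousOn_const.add <| continuousOn_const.mul <|
      continuousOn_integral_of_intervalIntegrable hT (hωv.intervalIntegrable_of_Icc hT)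
  have hw_deriv : ∀ t ∈ Ioo t₀ T, HasDerivAt w (C * ω (v t)) t := fun t ht =>
    ((hasDerivAt_integral_of_continuousOn_Icc hωv ht).const_mul C).const_add a
  have hw_deriv_le : ∀ t ∈ Ioo t₀ T, C * ω (v t) ≤ C * ω (w t) := fun t ht => by
    have ht' := Ioo_subset_Icc_self ht
    exact mul_le_mul_of_nonneg_left (hω_mono (hav t ht') (haw ht') (hv_le t ht')) hC
  have hT' : T ∈ Icc t₀ T := right_mem_Icc.2 hT
  calc Ω (v T) ≤ Ω (w T) :=
        monotoneOn_of_hasDerivAt_inv hω_pos hΩ (hav T hT') (haw hT') (hv_le T hT')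
    _ ≤ Ω (w t₀) + C * (T - t₀) :=
        bihari_of_hasDerivAt_le hT hω_pos hΩ hw_cont haw hw_deriv hw_deriv_le
    _ = Ω a + C * (T - t₀) := by simp [hw]

lemma bihari_of_intervalIntegrable {u : ℝ → ℝ} (hT : t₀ ≤ T) (hC : 0 ≤ C)
    (hω_cont : ContinuousOn ω (Ici a)) (hω_mono : Monotone ω)
    (hω_pos : ∀ x ∈ Ici a, 0 < ω x) (hΩ : ∀ x ∈ Ici a, HasDerivAt Ω (ω x)⁻¹ x)
    (hu : IntervalIntegrable (fun s => ω (u s)) volume t₀ T)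
    (hu_le : ∀ t ∈ Icc t₀ T, u t ≤ a + C * ∫ s in t₀..t, ω (u s)) :
    Ω (max a (u T)) ≤ Ω a + C * (T - t₀) := by
  have hpos : IntervalIntegrable (fun s => max (ω (u s)) 0) volume t₀ T :=
    ⟨hu.1.pos_part, hu.2.pos_part⟩
  set v : ℝ → ℝ := fun t => a + C * ∫ s in t₀..t, max (ω (u s)) 0
  have hsub : ∀ t ∈ Icc t₀ T, uIcc t₀ t ⊆ uIcc t₀ T := fun t ht =>
    uIcc_subset_uIcc_left (Icc_subset_uIcc ht)
  have hv_cont : ContinuousOn v (Icc t₀ T) :=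
    continuousOn_const.add <| continuousOn_const.mul <|
      continuousOn_integral_of_intervalIntegrable hT hpos
  have hav : ∀ t ∈ Icc t₀ T, a ≤ v t := fun t ht =>
    le_add_of_nonneg_right <| mul_nonneg hC <|
      intervalIntegral.integral_nonneg ht.1 fun s _ => le_max_right _ _
  have huv : ∀ t ∈ Icc t₀ T, u t ≤ v t := fun t ht => by
    refine (hu_le t ht).trans <| add_le_add_right (mul_le_mul_of_nonneg_left ?_ hC) a
    exact intervalIntegral.integral_mono_on ht.1 (hu.mono_set (hsub t ht))
      (hpos.mono_set (hsub t ht)) fun s _ => le_max_left _ _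
  have hv_le : ∀ t ∈ Icc t₀ T, v t ≤ a + C * ∫ s in t₀..t, ω (v s) := fun t ht => by
    have hωv : ContinuousOn (fun s => ω (v s)) (Icc t₀ T) := hω_cont.comp hv_cont hav
    refine add_le_add_right (mul_le_mul_of_nonneg_left ?_ hC) a
    refine intervalIntegral.integral_mono_on ht.1 (hpos.mono_set (hsub t ht))
      ((hωv.intervalIntegrable_of_Icc hT).mono_set (hsub t ht)) fun s hs => ?_
    have hs' : s ∈ Icc t₀ T := Icc_subset_Icc_right ht.2 hs
    exact max_le (hω_mono (huv s hs')) (hω_pos _ (hav s hs')).le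
  have hT' : T ∈ Icc t₀ T := right_mem_Icc.2 hT
  calc Ω (max a (u T)) ≤ Ω (v T) :=
        monotoneOn_of_hasDerivAt_inv hω_pos hΩ (le_max_left a _) (hav T hT')
          (max_le (hav T hT') (huv T hT'))
    _ ≤ Ω a + C * (T - t₀) :=
        bihari_of_continuousOn hT hC hω_cont (hω_mono.monotoneOn _) hω_pos hΩ hv_cont hav hv_le

end Bihari

section LogModulus

lemma lnpos_eq_posLog (z : ℝ) : lnpos z = log⁺ z := max_comm _ _

/-- The nonlinearity `ω(z) = (1 + ln₊ z) z` of the logarithmic Gronwall lemma, extended from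
`[0, ∞)` to an odd function on `ℝ`. -/
def logModulus (z : ℝ) : ℝ := (1 + lnpos z) * z

lemma continuous_logModulus : Continuous logModulus := by
  unfold logModulus
  simp only [lnpos_eq_posLog]
  fun_prop

lemma logModulus_neg (z : ℝ) : logModulus (-z) = -logModulus z := by
  simp only [logModulus, lnpos_eq_posLog, posLog_neg, mul_neg]

lemma monotone_logModulus : Monotone logModulus := by
  refine monotone_of_odd_of_monotoneOn_nonneg logModulus_neg fun x hx y _ hxy => ?_
  simp only [logModulus, lnpos_eq_posLog]
  exact mul_le_mul (by linarith [posLog_le_posLog hx hxy]) hxy hx (by linarith [@posLog_nonneg y])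

lemma logModulus_pos {z : ℝ} (hz : 0 < z) : 0 < logModulus z := by
  rw [logModulus, lnpos_eq_posLog]
  exact mul_pos (by linarith [@posLog_nonneg z]) hz

lemma logModulus_of_one_le {z : ℝ} (hz : 1 ≤ z) : logModulus z = (1 + log z) * z := by
  rw [logModulus, lnpos_eq_posLog, posLog_eq_log (hz.trans (le_abs_self z))]

lemma hasDerivAt_log_one_add_log {z : ℝ} (hz : 1 ≤ z) :
    HasDerivAt (fun x => log (1 + log x)) (logModulus z)⁻¹ z := by
  have hlog : 0 < 1 + log z := by linarith [log_nonneg hz]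
  have h := ((hasDerivAt_log (by linarith)).const_add 1).log hlog.ne'
  rwa [div_eq_inv_mul, ← mul_inv, ← logModulus_of_one_le hz] at h

lemma le_exp_of_log_one_add_log_le {x y c : ℝ} (hx : 0 < 1 + log x) (hy : 0 < 1 + log y)
    (h : log (1 + log y) ≤ log (1 + log x) + c) : y ≤ exp ((1 + log x) * exp c) := by
  have hlog : 1 + log y ≤ (1 + log x) * exp c := by
    rwa [← log_le_log_iff hy (by positivity), log_mul hx.ne' (exp_ne_zero c), log_exp]
  calc y ≤ exp (log y) := le_exp_log y
    _ ≤ exp ((1 + log x) * exp c) := exp_le_exp.2 (by linarith)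

end LogModulus

theorem log_gronwall_general {τ A C : ℝ} (hA : 0 ≤ A) (hC : 0 ≤ C) {N : ℝ → ℝ}
    (hNint : ∀ t ∈ Ico 0 τ, IntervalIntegrable (fun s => (1 + lnpos (N s)) * N s) volume 0 t)
    (hNineq : ∀ t ∈ Ico 0 τ, N t ≤ A + C * ∫ s in (0 : ℝ)..t, (1 + lnpos (N s)) * N s) :
    ∀ t ∈ Ico 0 τ, N t ≤ exp ((1 + log (1 + A)) * exp (C * t)) := by
  intro t ht
  have hA' : 1 ≤ 1 + A := by linarith
  have hmax : 1 ≤ max (1 + A) (N t) := hA'.trans (le_max_left _ _)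
  have hbihari : log (1 + log (max (1 + A) (N t))) ≤ log (1 + log (1 + A)) + C * (t - 0) :=
    bihari_of_intervalIntegrable (Ω := fun x => log (1 + log x)) ht.1 hC
      continuous_logModulus.continuousOn monotone_logModulus
      (fun x hx => logModulus_pos (by linarith [mem_Ici.1 hx]))
      (fun x hx => hasDerivAt_log_one_add_log (hA'.trans hx)) (hNint t ht)
      fun s hs => (hNineq s ⟨hs.1, hs.2.trans_lt ht.2⟩).trans (by simp only [logModulus]; linarith)
  rw [sub_zero] at hbihari
  exact (le_max_right _ _).trans <| le_exp_of_log_one_add_log_le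
    (by linarith [log_nonneg hA']) (by linarith [log_nonneg hmax]) hbihari

/-- **Logarithmic Gronwall lemma**: if `N : [0,τ) → [0,∞)` is continuous and satisfies
`N(t) ≤ A + C ∫₀ᵗ (1 + ln₊ N(s)) N(s) ds` (the integral being finite), then
`N(t) ≤ exp((1 + ln(1+A)) e^{Ct})` for every `t ∈ [0,τ)`; in particular `N` is bounded
on `[0,τ)`. -/
theorem log_gronwall (τ A C : ℝ) (hτ : 0 < τ) (hA : 0 ≤ A) (hC : 0 ≤ C)
    (N : ℝ → ℝ) (hNcont : ContinuousOn N (Set.Ico 0 τ))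
    (hNpos : ∀ t ∈ Set.Ico 0 τ, 0 ≤ N t)
    (hNint : ∀ t ∈ Set.Ico 0 τ,
      IntervalIntegrable (fun s => (1 + lnpos (N s)) * N s) volume 0 t)
    (hNineq : ∀ t ∈ Set.Ico 0 τ,
      N t ≤ A + C * ∫ s in (0:ℝ)..t, (1 + lnpos (N s)) * N s) :
    ∀ t ∈ Set.Ico 0 τ, N t ≤ Real.exp ((1 + Real.log (1 + A)) * Real.exp (C * t)) := by
  exact log_gronwall_general hA hC hNint hNineq
end
end
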